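/- arXiv:math/0504455 — 2 statements merged into one kernel-verified Lean document; each statement's English description precedes it below -/
import Mathlib

section
/- Let n ≥ 1, T, M > 0, and let Ω ⊂ ℝⁿ be open, bounded and convex. Let A : ℝⁿ → ℝ^{n×n} be smooth with each A(p) symmetric and positive semidefinite, let b : ℝⁿ × [0,T] → ℝ be continuous, define α(p) = |p|² · inf{ (vᵀA(p)v)/(v·p)² : v ∈ ℝⁿ, v·p ≠ 0 }, and suppose there is α̃ : (0,∞) → (0,∞) with α(p) = α̃(|p|) for all p ≠ 0. Let u : closure(Ω) × [0,T] → ℝ be continuous, smooth on closure(Ω) × (0,T] (meaning u_t, Du and D²u exist on Ω × (0,T] and extend continuously to closure(Ω) × (0,T]), satisfy u_t = Σ_{i,j} A(Du)_{ij}·D_{ij}u + b(Du,t) on Ω × (0,T], satisfy the Neumann condition that for every boundary point x of Ω, every t ∈ (0,T], and every ν ∈ ℝⁿ with ⟨ν, y−x⟩ ≤ 0 for all y ∈ Ω one has ⟨Du(x,t), ν⟩ = 0, and have osc_{closure(Ω)} u(·,0) ≤ M. Let φ : [0,∞) × (0,∞) → ℝ be continuous, with continuous partial derivatives φ_t, φ_z,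 φ_{zz} and with φ_z > 0 on (0,∞) × (0,∞), satisfying φ_t = 4·α̃(|φ_z|)·φ_{zz} there and the barrier boundary conditions. Then for all x, y ∈ closure(Ω) and all t ∈ (0,T]: |u(y,t) − u(x,t)| ≤ M · φ(|y−x|/M, t/M²). -/
open Set Filter Topology

/-- A function on `ℝⁿ` whose partial derivatives exist and are continuous on an open set
is Fréchet differentiable there. -/
theorem hasFDerivAt_of_continuousOn_partials {n : ℕ} {Ω : Set (Fin n → ℝ)} (hΩ : IsOpen Ω)
    {F : (Fin n → ℝ) → ℝ} {G : (Fin n → ℝ) → Fin n → ℝ}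
    (hF : ∀ x ∈ Ω, ∀ i,
      HasDerivAt (fun s : ℝ => F (x + s • (Pi.single i 1 : Fin n → ℝ))) (G x i) 0)
    (hG : ContinuousOn G Ω) {x : Fin n → ℝ} (hx : x ∈ Ω) :
    HasFDerivAt F (∑ i, G x i • (ContinuousLinearMap.proj i : (Fin n → ℝ) →L[ℝ] ℝ)) x := by
  rw [hasFDerivAt_iff_isLittleO_nhds_zero, Asymptotics.isLittleO_iff]
  intro c hc
  obtain ⟨ε, hε, hεc⟩ : ∃ ε : ℝ, 0 < ε ∧ n * ε ≤ c :=
    ⟨c / (n + 1), by positivity, by rw [mul_div_assoc', div_le_iff₀ (by positivity)]; nlinarith⟩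
  have hGx : ∀ᶠ z in 𝓝 x, z ∈ Ω ∧ dist (G z) (G x) < ε :=
    (hΩ.eventually_mem hx).and ((hG.continuousAt (hΩ.mem_nhds hx)).eventually (Metric.ball_mem_nhds _ hε))
  obtain ⟨r, hr, hball⟩ := Metric.eventually_nhds_iff.1 hGx
  filter_upwards [Metric.ball_mem_nhds (0 : Fin n → ℝ) hr] with h hh
  rw [mem_ball_zero_iff] at hh
  have key : ∀ s : Finset (Fin n),
      |F (x + ∑ i ∈ s, h i • (Pi.single i 1 : Fin n → ℝ)) - F x - ∑ i ∈ s, G x i * h i|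
        ≤ ε * ∑ i ∈ s, |h i| := by
    intro s
    induction s using Finset.induction_on with
    | empty => simp
    | insert a s ha ih =>
      set p := x + ∑ i ∈ s, h i • (Pi.single i 1 : Fin n → ℝ) with hp
      have hpc : ∀ j, p j = x j + if j ∈ s then h j else 0 := by
        intro j
        simp [hp, Finset.sum_apply, Pi.single_apply]
      have hmem : ∀ σ ∈ uIcc 0 (h a),
          dist (p + σ • (Pi.single a 1 : Fin n → ℝ)) x < r := by
        intro σ hσ
        refine lt_of_le_of_lt ?_ hh
        rw [dist_pi_le_iff (norm_nonneg _)]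
        intro j
        rw [Real.dist_eq, Pi.add_apply, hpc, Pi.smul_apply, Pi.single_apply]
        have hj := norm_le_pi_norm h j
        have hja := norm_le_pi_norm h a
        rw [Real.norm_eq_abs] at hj hja
        by_cases hj' : j = a
        · subst hj'
          have hσ' : |σ - 0| ≤ |h j - 0| := abs_sub_left_of_mem_uIcc hσ
          simp only [sub_zero] at hσ'
          simpa [ha] using hσ'.trans hja
        · by_cases hjs : j ∈ s <;> simp [hj', hjs, hj]
      have hder : ∀ σ ∈ uIcc 0 (h a), HasDerivWithinAt
          (fun τ : ℝ => F (p + τ • (Pi.single a 1 : Fin n → ℝ)) - τ * G x a)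
          (G (p + σ • (Pi.single a 1 : Fin n → ℝ)) a - G x a) (uIcc 0 (h a)) σ := by
        intro σ hσ
        have h1 := hF _ (hball (hmem σ hσ)).1 a
        have h2 : HasDerivAt (fun τ : ℝ => F (p + τ • (Pi.single a 1 : Fin n → ℝ)))
            (G (p + σ • (Pi.single a 1 : Fin n → ℝ)) a) σ := by
          have h3 := HasDerivAt.comp_sub_const σ σ (by rw [sub_self]; exact h1)
          refine h3.congr_of_eventuallyEq (Eventually.of_forall fun τ => ?_)
          simp only [add_assoc, ← add_smul, add_sub_cancel]
        have h4 : HasDerivAt (fun τ : ℝ => τ * G x a) (G x a) σ := by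
          simpa using (hasDerivAt_id σ).mul_const (G x a)
        exact (h2.sub h4).hasDerivWithinAt
      have hmv := (convex_uIcc 0 (h a)).norm_image_sub_le_of_norm_hasDerivWithin_le hder
        (C := ε) (fun σ hσ => by
          have := (hball (hmem σ hσ)).2
          rw [dist_eq_norm] at this
          exact ((norm_le_pi_norm _ a).trans this.le)) left_mem_uIcc right_mem_uIcc
      simp only [Real.norm_eq_abs, zero_smul, add_zero, zero_mul, sub_zero] at hmv
      rw [Finset.sum_insert ha, Finset.sum_insert ha, Finset.sum_insert ha]
      have hq : x + (h a • (Pi.single a 1 : Fin n → ℝ) + ∑ i ∈ s, h i • Pi.single i 1)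
          = p + h a • Pi.single a 1 := by rw [hp]; abel
      rw [hq, mul_add]
      calc _ = |(F (p + h a • Pi.single a 1) - h a * G x a - F p) +
              (F p - F x - ∑ i ∈ s, G x i * h i)| := by congr 1; ring
        _ ≤ _ := abs_add_le _ _
        _ ≤ _ := add_le_add hmv ih
  have hfin := key Finset.univ
  have hsum : ∑ i, h i • (Pi.single i 1 : Fin n → ℝ) = h := by
    ext j; simp [Finset.sum_apply, Pi.single_apply]
  rw [hsum] at hfin
  simp only [_root_.sum_apply, _root_.smul_apply,
    ContinuousLinearMap.proj_apply, smul_eq_mul, Real.norm_eq_abs]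
  refine hfin.trans ?_
  have hle : ∑ i, |h i| ≤ n * ‖h‖ := by
    have := Finset.sum_le_card_nsmul Finset.univ (fun i => |h i|) ‖h‖
      (fun i _ => norm_le_pi_norm h i)
    simpa using this
  calc ε * ∑ i, |h i| ≤ ε * (n * ‖h‖) := by gcongr
    _ = (n * ε) * ‖h‖ := by ring
    _ ≤ c * ‖h‖ := by gcongr

/-- Derivative along a line of a function with continuous partial derivatives. -/
theorem hasDerivAt_comp_line_of_partials {n : ℕ} {Ω : Set (Fin n → ℝ)} (hΩ : IsOpen Ω)
    {F : (Fin n → ℝ) → ℝ} {G : (Fin n → ℝ) → Fin n → ℝ}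
    (hF : ∀ x ∈ Ω, ∀ i,
      HasDerivAt (fun s : ℝ => F (x + s • (Pi.single i 1 : Fin n → ℝ))) (G x i) 0)
    (hG : ContinuousOn G Ω) (x v : Fin n → ℝ) (s : ℝ) (hs : x + s • v ∈ Ω) :
    HasDerivAt (fun s : ℝ => F (x + s • v)) (∑ i, G (x + s • v) i * v i) s := by
  have h1 := hasFDerivAt_of_continuousOn_partials hΩ hF hG hs
  have h2 : HasDerivAt (fun s : ℝ => x + s • v) v s := by
    simpa using ((hasDerivAt_id s).smul_const v).const_add x
  have h3 := h1.comp_hasDerivAt s h2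
  simp only [_root_.sum_apply, _root_.smul_apply, ContinuousLinearMap.proj_apply,
    smul_eq_mul] at h3
  exact h3

/-- Necessary second-order condition at a local maximum. -/
theorem IsLocalMax.second_deriv_nonpos {f f' : ℝ → ℝ} {f'' a : ℝ} (hmax : IsLocalMax f a)
    (hf : ∀ᶠ s in 𝓝 a, HasDerivAt f (f' s) s) (hf' : HasDerivAt f' f'' a) : f'' ≤ 0 := by
  by_contra! hpos
  have hde : deriv f =ᶠ[𝓝 a] f' := hf.mono fun s hs => hs.deriv
  have hdd : deriv (deriv f) a = f'' := by rw [hde.deriv_eq, hf'.deriv]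
  have hmin := isLocalMin_of_deriv_deriv_pos (by rw [hdd]; exact hpos) hmax.deriv_eq_zero
    hf.self_of_nhds.continuousAt
  have hconst : f =ᶠ[𝓝 a] fun _ => f a := by
    filter_upwards [hmax, hmin] with s h1 h2 using le_antisymm h1 h2
  have h0 : deriv f =ᶠ[𝓝 a] fun _ => 0 := by
    simpa using hconst.deriv
  rw [h0.deriv_eq] at hdd
  simp at hdd
  exact hpos.ne hdd

/-- A right derivative at a one-sided maximum is nonpositive. -/
theorem HasDerivWithinAt.nonpos_of_forall_le {f : ℝ → ℝ} {d a b : ℝ} (hab : a < b)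
    (hf : HasDerivWithinAt f d (Ioi a) a) (hmax : ∀ s ∈ Ioo a b, f s ≤ f a) : d ≤ 0 := by
  have h := (hasDerivWithinAt_iff_tendsto_slope' self_notMem_Ioi).1 hf
  refine le_of_tendsto h ?_
  filter_upwards [Ioo_mem_nhdsGT hab] with s hs
  rw [slope_def_field]
  exact div_nonpos_of_nonpos_of_nonneg (sub_nonpos.2 (hmax s hs)) (sub_nonneg.2 hs.1.le)

/-- A left derivative at a one-sided maximum is nonnegative. -/
theorem HasDerivWithinAt.nonneg_of_forall_le {f : ℝ → ℝ} {d a b : ℝ} (hab : a < b)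
    (hf : HasDerivWithinAt f d (Iio b) b) (hmax : ∀ s ∈ Ioo a b, f s ≤ f b) : 0 ≤ d := by
  have h := (hasDerivWithinAt_iff_tendsto_slope' self_notMem_Iio).1 hf
  refine ge_of_tendsto h ?_
  filter_upwards [Ioo_mem_nhdsLT hab] with s hs
  rw [slope_def_field]
  exact div_nonneg_of_nonpos (sub_nonpos.2 (hmax s hs)) (sub_nonpos.2 hs.2.le)

/-- The pairing of a positive semidefinite symmetric matrix with a matrix whose quadratic form
is nonpositive is nonpositive. -/
theorem sum_mul_nonpos_of_posSemidef {n : ℕ} {B S : Fin n → Fin n → ℝ}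
    (hB_symm : ∀ i j, B i j = B j i)
    (hB : ∀ v : Fin n → ℝ, 0 ≤ ∑ i, ∑ j, v i * B i j * v j)
    (hS : ∀ v : Fin n → ℝ, ∑ i, ∑ j, v i * S i j * v j ≤ 0) :
    ∑ i, ∑ j, B i j * S i j ≤ 0 := by
  have hpsd : (Matrix.of B).PosSemidef := by
    refine Matrix.PosSemidef.of_dotProduct_mulVec_nonneg ?_ fun v => ?_
    · ext i j; simp [hB_symm i j]
    · simpa [dotProduct, Matrix.mulVec, Finset.mul_sum, mul_assoc] using hB v
  obtain ⟨m, C, hC⟩ := Matrix.posSemidef_iff_eq_sum_vecMulVec.1 hpsd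
  have hBC : ∀ i j, B i j = ∑ k, C k i * C k j := by
    intro i j
    simpa [Matrix.sum_apply, Matrix.vecMulVec_apply] using congrFun (congrFun hC i) j
  have heq : ∑ i, ∑ j, B i j * S i j = ∑ k, ∑ i, ∑ j, C k i * S i j * C k j := by
    simp only [hBC, Finset.sum_mul]
    conv_rhs => rw [Finset.sum_comm]
    refine Finset.sum_congr rfl fun i _ => ?_
    rw [Finset.sum_comm]
    exact Finset.sum_congr rfl fun k _ => Finset.sum_congr rfl fun j _ => by ring
  rw [heq]
  exact Finset.sum_nonpos fun k _ => hS (C k)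

/-- The Euclidean length of a vector of `ℝⁿ`. -/
noncomputable def euclLength {n : ℕ} (v : Fin n → ℝ) : ℝ := Real.sqrt (∑ i, v i ^ 2)

theorem euclLength_eq_sqrt_dotProduct {n : ℕ} (v : Fin n → ℝ) :
    euclLength v = Real.sqrt (v ⬝ᵥ v) := by
  simp [euclLength, dotProduct, pow_two]

theorem euclLength_sub_comm {n : ℕ} (v w : Fin n → ℝ) :
    euclLength (v - w) = euclLength (w - v) := by
  rw [euclLength_eq_sqrt_dotProduct, euclLength_eq_sqrt_dotProduct, ← neg_sub w v,
    neg_dotProduct_neg]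

theorem continuous_euclLength {n : ℕ} : Continuous (euclLength : (Fin n → ℝ) → ℝ) := by
  unfold euclLength
  fun_prop

theorem dotProduct_self_nonneg_real {n : ℕ} (v : Fin n → ℝ) : 0 ≤ v ⬝ᵥ v :=
  Finset.sum_nonneg fun i _ => mul_self_nonneg (v i)

theorem dotProduct_self_pos_of_ne_zero {n : ℕ} {v : Fin n → ℝ} (hv : v ≠ 0) : 0 < v ⬝ᵥ v :=
  lt_of_le_of_ne (dotProduct_self_nonneg_real v) fun h => hv (dotProduct_self_eq_zero.1 h.symm)

theorem euclLength_pos {n : ℕ} {v : Fin n → ℝ} (hv : v ≠ 0) : 0 < euclLength v := by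
  rw [euclLength_eq_sqrt_dotProduct]
  exact Real.sqrt_pos.2 (dotProduct_self_pos_of_ne_zero hv)

theorem euclLength_mul_self {n : ℕ} (v : Fin n → ℝ) :
    euclLength v * euclLength v = v ⬝ᵥ v := by
  rw [euclLength_eq_sqrt_dotProduct, Real.mul_self_sqrt (dotProduct_self_nonneg_real v)]

theorem euclLength_smul_of_nonneg {n : ℕ} {c : ℝ} (hc : 0 ≤ c) (v : Fin n → ℝ) :
    euclLength (c • v) = c * euclLength v := by
  rw [euclLength_eq_sqrt_dotProduct, euclLength_eq_sqrt_dotProduct, smul_dotProduct,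
    dotProduct_smul, smul_eq_mul, smul_eq_mul, ← mul_assoc, Real.sqrt_mul (mul_self_nonneg c),
    Real.sqrt_mul_self hc]

theorem hasDerivAt_dotProduct_self_line {n : ℕ} (v w : Fin n → ℝ) (s : ℝ) :
    HasDerivAt (fun s : ℝ => (v + s • w) ⬝ᵥ (v + s • w)) (2 * (v ⬝ᵥ w) + 2 * s * (w ⬝ᵥ w)) s := by
  have h : HasDerivAt (fun s : ℝ => v ⬝ᵥ v + 2 * (v ⬝ᵥ w) * s + (w ⬝ᵥ w) * s ^ 2)
      (2 * (v ⬝ᵥ w) * 1 + (w ⬝ᵥ w) * (2 * s)) s := by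
    have h1 := ((hasDerivAt_id s).const_mul (2 * (v ⬝ᵥ w))).const_add (v ⬝ᵥ v)
    have h2 := (hasDerivAt_pow 2 s).const_mul (w ⬝ᵥ w)
    simpa using h1.fun_add h2
  refine (h.congr_deriv (by ring)).congr_of_eventuallyEq (Eventually.of_forall fun s => ?_)
  simp only [add_dotProduct, dotProduct_add, smul_dotProduct, dotProduct_smul, smul_eq_mul,
    dotProduct_comm w v]
  ring

theorem hasDerivAt_euclLength_line {n : ℕ} {v : Fin n → ℝ} (hv : v ≠ 0) (w : Fin n → ℝ) :
    HasDerivAt (fun s : ℝ => euclLength (v + s • w)) ((v ⬝ᵥ w) / euclLength v) 0 := by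
  have h := (hasDerivAt_dotProduct_self_line v w 0).sqrt
    (by simpa using (dotProduct_self_pos_of_ne_zero hv).ne')
  simp only [euclLength_eq_sqrt_dotProduct]
  refine h.congr_deriv ?_
  simp only [zero_smul, add_zero, mul_zero, zero_mul]
  rw [mul_div_mul_left _ _ two_ne_zero]

/-- One-sided directional derivative at a point of the closure of a convex open set. -/
theorem hasDerivWithinAt_line_of_mem_closure {n : ℕ} {Ω : Set (Fin n → ℝ)} (hΩ : IsOpen Ω)
    (hconv : Convex ℝ Ω) {F : (Fin n → ℝ) → ℝ} {G : (Fin n → ℝ) → Fin n → ℝ}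
    (hFc : ContinuousOn F (closure Ω))
    (hF : ∀ x ∈ Ω, ∀ i,
      HasDerivAt (fun s : ℝ => F (x + s • (Pi.single i 1 : Fin n → ℝ))) (G x i) 0)
    (hG : ContinuousOn G (closure Ω)) {y z : Fin n → ℝ} (hy : y ∈ closure Ω) (hz : z ∈ Ω) :
    HasDerivWithinAt (fun s : ℝ => F (y + s • (z - y))) (G y ⬝ᵥ (z - y)) (Ioi 0) 0 := by
  have hmem : ∀ s ∈ Ioc (0 : ℝ) 1, y + s • (z - y) ∈ Ω := fun s hs => by
    have := hconv.add_smul_sub_mem_interior' hy (by rwa [hΩ.interior_eq]) hs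
    rwa [hΩ.interior_eq] at this
  have hder : ∀ s ∈ Ioc (0 : ℝ) 1, HasDerivAt (fun s : ℝ => F (y + s • (z - y)))
      (G (y + s • (z - y)) ⬝ᵥ (z - y)) s := fun s hs =>
    hasDerivAt_comp_line_of_partials hΩ hF (hG.mono subset_closure) _ _ _ (hmem s hs)
  have hI : Ioc (0 : ℝ) 1 ∈ 𝓝[>] (0 : ℝ) := Ioc_mem_nhdsGT one_pos
  have hline : Tendsto (fun s : ℝ => y + s • (z - y)) (𝓝[>] 0) (𝓝[closure Ω] y) := by
    refine tendsto_nhdsWithin_iff.2 ⟨?_, ?_⟩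
    · have : Continuous fun s : ℝ => y + s • (z - y) := by fun_prop
      simpa using (this.tendsto 0).mono_left nhdsWithin_le_nhds
    · filter_upwards [hI] with s hs using subset_closure (hmem s hs)
  refine (hasDerivWithinAt_Ici_of_tendsto_deriv (s := Ioc (0 : ℝ) 1)
    (fun s hs => (hder s hs).differentiableAt.differentiableWithinAt) ?_ hI ?_).mono Ioi_subset_Ici_self
  · have := (hFc y hy).tendsto.comp hline
    simp only [ContinuousWithinAt, zero_smul, add_zero]
    exact this.mono_left (nhdsWithin_mono _ fun s hs => hs.1)
  · have h1 : Tendsto (fun s : ℝ => G (y + s • (z - y)) ⬝ᵥ (z - y)) (𝓝[>] 0)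
        (𝓝 (G y ⬝ᵥ (z - y))) := by
      have h2 : Continuous fun g : Fin n → ℝ => g ⬝ᵥ (z - y) := by
        unfold dotProduct; fun_prop
      exact (h2.tendsto _).comp ((hG y hy).tendsto.comp hline)
    refine h1.congr' ?_
    filter_upwards [hI] with s hs using (hder s hs).deriv.symm

/-- A boundary point of a convex open set has a normal vector strictly separating it from
the set. -/
theorem exists_strict_normal {n : ℕ} {Ω : Set (Fin n → ℝ)} (hΩ : IsOpen Ω)
    (hconv : Convex ℝ Ω) {y : Fin n → ℝ} (hy : y ∉ Ω) :
    ∃ ν : Fin n → ℝ, ∀ z ∈ Ω, ν ⬝ᵥ (z - y) < 0 := by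
  obtain ⟨f, hf⟩ := geometric_hahn_banach_open_point hconv hΩ hy
  have hfv : ∀ v : Fin n → ℝ, (fun i => f (Pi.single i 1)) ⬝ᵥ v = f v := by
    intro v
    conv_rhs => rw [pi_eq_sum_univ' v, map_sum]
    refine Finset.sum_congr rfl fun i _ => ?_
    rw [map_smul, smul_eq_mul, mul_comm]
  refine ⟨fun i => f (Pi.single i 1), fun z hz => ?_⟩
  rw [hfv, map_sub]
  exact sub_neg.2 (hf z hz)

/-- A variational inequality with the outward-pointing perturbation `2δ(y - x₀)` and a Neumann
condition excludes boundary points and forces the critical point equation. -/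
theorem mem_and_eq_of_variational_inequality {n : ℕ} {Ω : Set (Fin n → ℝ)} (hΩ : IsOpen Ω)
    (hconv : Convex ℝ Ω) {x₀ y g q : Fin n → ℝ} (hx₀ : x₀ ∈ Ω) (hy : y ∈ closure Ω)
    {δ : ℝ} (hδ : 0 < δ)
    (hvar : ∀ z ∈ Ω, (g - q - (2 * δ) • (y - x₀)) ⬝ᵥ (z - y) ≤ 0)
    (hneu : y ∈ frontier Ω → ∀ ν : Fin n → ℝ, (∀ z ∈ Ω, ν ⬝ᵥ (z - y) ≤ 0) → g ⬝ᵥ ν = 0)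
    (hq : ∀ ν : Fin n → ℝ, (∀ z ∈ Ω, ν ⬝ᵥ (z - y) ≤ 0) → 0 ≤ q ⬝ᵥ ν) :
    y ∈ Ω ∧ g = q + (2 * δ) • (y - x₀) := by
  set w := g - q - (2 * δ) • (y - x₀) with hw
  have hgw : g = q + (2 * δ) • (y - x₀) + w := by rw [hw]; abel
  have hw0 : w ⬝ᵥ w ≤ 0 → g = q + (2 * δ) • (y - x₀) := fun h => by
    have : w = 0 := dotProduct_self_eq_zero.1 (le_antisymm h (dotProduct_self_nonneg_real w))
    rw [hgw, this, add_zero]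
  by_cases hyΩ : y ∈ Ω
  · refine ⟨hyΩ, hw0 ?_⟩
    have hc : Continuous fun s : ℝ => y + s • w := by fun_prop
    have hev : ∀ᶠ s : ℝ in 𝓝[>] 0, y + s • w ∈ Ω :=
      ((hc.tendsto 0).eventually (hΩ.mem_nhds (by simpa using hyΩ))).filter_mono
        nhdsWithin_le_nhds
    obtain ⟨s, hsΩ, hs⟩ := (hev.and self_mem_nhdsWithin).exists
    have := hvar _ hsΩ
    rw [add_sub_cancel_left, dotProduct_smul, smul_eq_mul] at this
    exact nonpos_of_mul_nonpos_right this hs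
  · exfalso
    have hfr : y ∈ frontier Ω := ⟨hy, by rwa [hΩ.interior_eq]⟩
    have hout : ∀ ν : Fin n → ℝ, (y - x₀) ⬝ᵥ ν = -(ν ⬝ᵥ (x₀ - y)) := fun ν => by
      rw [← neg_sub x₀ y, neg_dotProduct, dotProduct_comm]
    have hg : g = q + (2 * δ) • (y - x₀) := by
      refine hw0 ?_
      have h1 := hneu hfr w hvar
      rw [hgw, add_dotProduct, add_dotProduct, smul_dotProduct, hout, smul_eq_mul] at h1
      have h2 := hq w hvar
      have h3 := mul_nonneg (by positivity : 0 ≤ 2 * δ) (neg_nonneg.2 (hvar x₀ hx₀))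
      linarith
    obtain ⟨ν, hν⟩ := exists_strict_normal hΩ hconv hyΩ
    have hν' : ∀ z ∈ Ω, ν ⬝ᵥ (z - y) ≤ 0 := fun z hz => (hν z hz).le
    have h1 := hneu hfr ν hν'
    rw [hg, add_dotProduct, smul_dotProduct, hout, smul_eq_mul] at h1
    have h2 := hq ν hν'
    have h3 := mul_pos (by positivity : 0 < 2 * δ) (neg_pos.2 (hν x₀ hx₀))
    linarith

/-- First-order conditions at a maximum of `V(y) - ρ(|y - a|) - δ|y - x₀|²` under a Neumann
condition on a convex domain: the maximum is interior and critical. -/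
theorem mem_and_gradient_eq_of_max {n : ℕ} {Ω : Set (Fin n → ℝ)} (hΩ : IsOpen Ω)
    (hconv : Convex ℝ Ω) {V : (Fin n → ℝ) → ℝ} {K : (Fin n → ℝ) → Fin n → ℝ}
    (hVc : ContinuousOn V (closure Ω))
    (hV : ∀ x ∈ Ω, ∀ i,
      HasDerivAt (fun s : ℝ => V (x + s • (Pi.single i 1 : Fin n → ℝ))) (K x i) 0)
    (hK : ContinuousOn K (closure Ω))
    (hneu : ∀ y ∈ frontier Ω, ∀ ν : Fin n → ℝ, (∀ z ∈ Ω, ν ⬝ᵥ (z - y) ≤ 0) → K y ⬝ᵥ ν = 0)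
    {ρ : ℝ → ℝ} {ρ' δ : ℝ} {x₀ a y : Fin n → ℝ} (hx₀ : x₀ ∈ Ω) (ha : a ∈ closure Ω)
    (hy : y ∈ closure Ω) (hya : y ≠ a) (hδ : 0 < δ)
    (hρ : HasDerivAt ρ ρ' (euclLength (y - a))) (hρ' : 0 < ρ')
    (hmax : ∀ z ∈ closure Ω, V z - ρ (euclLength (z - a)) - δ * ((z - x₀) ⬝ᵥ (z - x₀))
      ≤ V y - ρ (euclLength (y - a)) - δ * ((y - x₀) ⬝ᵥ (y - x₀))) :
    y ∈ Ω ∧ K y = ρ' • (euclLength (y - a))⁻¹ • (y - a) + (2 * δ) • (y - x₀) := by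
  have hya' : y - a ≠ 0 := sub_ne_zero.2 hya
  have hr := euclLength_pos hya'
  refine mem_and_eq_of_variational_inequality hΩ hconv hx₀ hy hδ ?_ (hneu y) ?_
  · intro z hz
    have h1 := hasDerivWithinAt_line_of_mem_closure hΩ hconv hVc hV hK hy hz
    have h2 : HasDerivAt (fun s : ℝ => ρ (euclLength (y - a + s • (z - y))))
        (ρ' * (((y - a) ⬝ᵥ (z - y)) / euclLength (y - a))) 0 :=
      HasDerivAt.comp (0 : ℝ) (by simpa using hρ) (hasDerivAt_euclLength_line hya' (z - y))
    have h3 := (hasDerivAt_dotProduct_self_line (y - x₀) (z - y) 0).const_mul δ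
    have h4 := ((h1.sub h2.hasDerivWithinAt).sub h3.hasDerivWithinAt).nonpos_of_forall_le one_pos
      (fun s hs => by
        have hmem : y + s • (z - y) ∈ closure Ω := by
          have := hconv.add_smul_sub_mem_interior' hy (by rwa [hΩ.interior_eq])
            ⟨hs.1, hs.2.le⟩
          exact interior_subset_closure this
        have := hmax _ hmem
        simpa [add_sub_right_comm] using this)
    simp only [sub_dotProduct, smul_dotProduct, smul_eq_mul] at h4 ⊢
    refine le_of_eq_of_le ?_ h4
    field_simp
    ring
  · intro ν hν
    have hcl : ∀ z ∈ closure Ω, ν ⬝ᵥ (z - y) ≤ 0 := by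
      have hcl : IsClosed {z : Fin n → ℝ | ν ⬝ᵥ (z - y) ≤ 0} :=
        isClosed_le (by unfold dotProduct; fun_prop) continuous_const
      exact fun z hz => closure_minimal hν hcl hz
    have := hcl a ha
    rw [smul_dotProduct, smul_dotProduct, smul_eq_mul, smul_eq_mul, ← neg_sub a y,
      neg_dotProduct, dotProduct_comm]
    rw [neg_sub]
    have h1 : 0 ≤ (euclLength (y - a))⁻¹ := inv_nonneg.2 hr.le
    exact mul_nonneg hρ'.le (mul_nonneg h1 (neg_nonneg.2 this))

/-- Second-order condition at an interior maximum of the two-point function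
`U(y) - U(x) - ρ(|y - x|) - δ(|y - x₀|² + |x - x₀|²)` along a direction for which the length
`|y - x|` changes affinely. -/
theorem second_order_of_two_point_max {n : ℕ} {Ω : Set (Fin n → ℝ)} (hΩ : IsOpen Ω)
    {U : (Fin n → ℝ) → ℝ} {G : (Fin n → ℝ) → Fin n → ℝ}
    {H : (Fin n → ℝ) → Fin n → Fin n → ℝ}
    (hU : ∀ x ∈ Ω, ∀ i,
      HasDerivAt (fun s : ℝ => U (x + s • (Pi.single i 1 : Fin n → ℝ))) (G x i) 0)
    (hGH : ∀ x ∈ Ω, ∀ i j,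
      HasDerivAt (fun s : ℝ => G (x + s • (Pi.single i 1 : Fin n → ℝ)) j) (H x i j) 0)
    (hG : ContinuousOn G Ω) (hH : ContinuousOn H Ω)
    {ρ ρ' : ℝ → ℝ} {ρ'' δ κ : ℝ} {x₀ x y ξ η : Fin n → ℝ} (hx : x ∈ Ω) (hy : y ∈ Ω)
    (hρ : ∀ᶠ z in 𝓝 (euclLength (y - x)), HasDerivAt ρ (ρ' z) z)
    (hρ' : HasDerivAt ρ' ρ'' (euclLength (y - x)))
    (hlen : ∀ᶠ s : ℝ in 𝓝 0,
      euclLength (y + s • η - (x + s • ξ)) = euclLength (y - x) + κ * s)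
    (hmax : ∀ x' ∈ Ω, ∀ y' ∈ Ω, U y' - U x' - ρ (euclLength (y' - x'))
        - δ * ((y' - x₀) ⬝ᵥ (y' - x₀) + (x' - x₀) ⬝ᵥ (x' - x₀))
      ≤ U y - U x - ρ (euclLength (y - x))
        - δ * ((y - x₀) ⬝ᵥ (y - x₀) + (x - x₀) ⬝ᵥ (x - x₀))) :
    (∑ i, ∑ j, η i * H y i j * η j) - (∑ i, ∑ j, ξ i * H x i j * ξ j)
      ≤ κ ^ 2 * ρ'' + 2 * δ * (ξ ⬝ᵥ ξ + η ⬝ᵥ η) := by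
  set r := euclLength (y - x) with hr
  have hlin : ∀ p v : Fin n → ℝ, p ∈ Ω → ∀ᶠ s : ℝ in 𝓝 0, p + s • v ∈ Ω := fun p v hp => by
    have hc : Continuous fun s : ℝ => p + s • v := by fun_prop
    exact (hc.tendsto 0).eventually (hΩ.mem_nhds (by simpa using hp))
  have hsnd : ∀ p v : Fin n → ℝ, p ∈ Ω → HasDerivAt (fun s : ℝ => G (p + s • v) ⬝ᵥ v)
      (∑ i, ∑ j, v i * H p i j * v j) 0 := by
    intro p v hp
    have h1 : ∀ j, HasDerivAt (fun s : ℝ => G (p + s • v) j) (∑ i, H p i j * v i) 0 := by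
      intro j
      have := hasDerivAt_comp_line_of_partials hΩ (F := fun x => G x j)
        (G := fun x i => H x i j) (fun x hx i => hGH x hx i j)
        (continuousOn_pi.2 fun i => continuousOn_pi.1 (continuousOn_pi.1 hH i) j) p v 0
        (by simpa using hp)
      simpa using this
    have h2 := HasDerivAt.fun_sum (u := Finset.univ) fun j _ => (h1 j).mul_const (v j)
    refine h2.congr_deriv ?_
    rw [Finset.sum_comm]
    refine Finset.sum_congr rfl fun i _ => ?_
    rw [Finset.sum_mul]
    exact Finset.sum_congr rfl fun j _ => by ring
  have hfst : ∀ p v : Fin n → ℝ, ∀ s : ℝ, p + s • v ∈ Ω →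
      HasDerivAt (fun s : ℝ => U (p + s • v)) (G (p + s • v) ⬝ᵥ v) s := fun p v s hs =>
    hasDerivAt_comp_line_of_partials hΩ hU hG p v s hs
  have hrline : Continuous fun s : ℝ => r + κ * s := by fun_prop
  have haff : ∀ s : ℝ, HasDerivAt (fun s : ℝ => r + κ * s) κ s := fun s => by
    simpa using ((hasDerivAt_id s).const_mul κ).const_add r
  let f : ℝ → ℝ := fun s => U (y + s • η) - U (x + s • ξ) - ρ (r + κ * s)
    - δ * ((y - x₀ + s • η) ⬝ᵥ (y - x₀ + s • η) + (x - x₀ + s • ξ) ⬝ᵥ (x - x₀ + s • ξ))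
  let f' : ℝ → ℝ := fun s => G (y + s • η) ⬝ᵥ η - G (x + s • ξ) ⬝ᵥ ξ - ρ' (r + κ * s) * κ
    - δ * ((2 * ((y - x₀) ⬝ᵥ η) + 2 * s * (η ⬝ᵥ η))
      + (2 * ((x - x₀) ⬝ᵥ ξ) + 2 * s * (ξ ⬝ᵥ ξ)))
  have hf : ∀ᶠ s in 𝓝 (0 : ℝ), HasDerivAt f (f' s) s := by
    have hρev : ∀ᶠ s in 𝓝 (0 : ℝ), HasDerivAt ρ (ρ' (r + κ * s)) (r + κ * s) :=
      (hrline.tendsto 0).eventually (by simpa using hρ)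
    filter_upwards [hlin y η hy, hlin x ξ hx, hρev] with s h1 h2 h3
    exact (((hfst _ _ _ h1).sub (hfst _ _ _ h2)).sub (h3.comp s (haff s))).sub
      (((hasDerivAt_dotProduct_self_line _ _ s).add
        (hasDerivAt_dotProduct_self_line _ _ s)).const_mul δ)
  have hf' : HasDerivAt f' ((∑ i, ∑ j, η i * H y i j * η j) - (∑ i, ∑ j, ξ i * H x i j * ξ j)
      - ρ'' * κ * κ - δ * (2 * (η ⬝ᵥ η) + 2 * (ξ ⬝ᵥ ξ))) 0 := by
    have h1 : HasDerivAt (fun s : ℝ => ρ' (r + κ * s)) (ρ'' * κ) 0 :=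
      HasDerivAt.comp (0 : ℝ) (by simpa using hρ') (haff 0)
    have h2 : ∀ c d : ℝ, HasDerivAt (fun s : ℝ => 2 * c + 2 * s * d) (2 * d) 0 := fun c d => by
      simpa using (((hasDerivAt_id (0 : ℝ)).const_mul 2).mul_const d).const_add (2 * c)
    exact (((hsnd y η hy).sub (hsnd x ξ hx)).sub (h1.mul_const κ)).sub
      (((h2 _ _).add (h2 _ _)).const_mul δ)
  have hloc : IsLocalMax f 0 := by
    filter_upwards [hlin y η hy, hlin x ξ hx, hlen] with s h1 h2 h3
    have := hmax _ h2 _ h1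
    rw [h3] at this
    simpa [f, add_sub_right_comm] using this
  have := hloc.second_deriv_nonpos hf hf'
  linarith

theorem euclLength_zero {n : ℕ} : euclLength (0 : Fin n → ℝ) = 0 := by
  simp [euclLength]

theorem norm_le_euclLength {n : ℕ} (v : Fin n → ℝ) : ‖v‖ ≤ euclLength v := by
  refine (pi_norm_le_iff_of_nonneg (Real.sqrt_nonneg _)).2 fun i => ?_
  refine Real.le_sqrt_of_sq_le ?_
  rw [Real.norm_eq_abs, sq_abs]
  exact Finset.single_le_sum (f := fun i => v i ^ 2) (fun j _ => sq_nonneg (v j))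
    (Finset.mem_univ i)

theorem dotProduct_unit_self {n : ℕ} {v : Fin n → ℝ} (hv : v ≠ 0) :
    ((euclLength v)⁻¹ • v) ⬝ᵥ ((euclLength v)⁻¹ • v) = 1 := by
  have := (euclLength_pos hv).ne'
  rw [smul_dotProduct, dotProduct_smul, ← euclLength_mul_self, smul_eq_mul, smul_eq_mul]
  field_simp

/-- First- and second-order conditions at a maximum of the two-point function
`U(y) - U(x) - ρ(|y - x|) - δ(|y - x₀|² + |x - x₀|²)` under the Neumann condition. -/
theorem two_point_max_conditions {n : ℕ} {Ω : Set (Fin n → ℝ)} (hΩ : IsOpen Ω)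
    (hconv : Convex ℝ Ω) {U : (Fin n → ℝ) → ℝ} {G : (Fin n → ℝ) → Fin n → ℝ}
    {H : (Fin n → ℝ) → Fin n → Fin n → ℝ} (hUc : ContinuousOn U (closure Ω))
    (hU : ∀ x ∈ Ω, ∀ i,
      HasDerivAt (fun s : ℝ => U (x + s • (Pi.single i 1 : Fin n → ℝ))) (G x i) 0)
    (hGH : ∀ x ∈ Ω, ∀ i j,
      HasDerivAt (fun s : ℝ => G (x + s • (Pi.single i 1 : Fin n → ℝ)) j) (H x i j) 0)
    (hG : ContinuousOn G (closure Ω)) (hH : ContinuousOn H (closure Ω))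
    (hneu : ∀ y ∈ frontier Ω, ∀ ν : Fin n → ℝ, (∀ z ∈ Ω, ν ⬝ᵥ (z - y) ≤ 0) → G y ⬝ᵥ ν = 0)
    {ρ ρ' : ℝ → ℝ} {ρ'' δ : ℝ} {x₀ x y : Fin n → ℝ} (hx₀ : x₀ ∈ Ω) (hx : x ∈ closure Ω)
    (hy : y ∈ closure Ω) (hxy : x ≠ y) (hδ : 0 < δ)
    (hρ : ∀ z, 0 < z → HasDerivAt ρ (ρ' z) z)
    (hρ' : HasDerivAt ρ' ρ'' (euclLength (y - x))) (hpos : 0 < ρ' (euclLength (y - x)))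
    (hmax : ∀ x' ∈ closure Ω, ∀ y' ∈ closure Ω, U y' - U x' - ρ (euclLength (y' - x'))
        - δ * ((y' - x₀) ⬝ᵥ (y' - x₀) + (x' - x₀) ⬝ᵥ (x' - x₀))
      ≤ U y - U x - ρ (euclLength (y - x))
        - δ * ((y - x₀) ⬝ᵥ (y - x₀) + (x - x₀) ⬝ᵥ (x - x₀))) :
    x ∈ Ω ∧ y ∈ Ω ∧
    G y = ρ' (euclLength (y - x)) • (euclLength (y - x))⁻¹ • (y - x) + (2 * δ) • (y - x₀) ∧
    G x = ρ' (euclLength (y - x)) • (euclLength (y - x))⁻¹ • (y - x) - (2 * δ) • (x - x₀) ∧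
    (∀ w : Fin n → ℝ, ∑ i, ∑ j, w i * (H y i j - H x i j) * w j ≤ 4 * δ * (w ⬝ᵥ w)) ∧
    ∑ i, ∑ j, ((euclLength (y - x))⁻¹ • (y - x)) i * (H y i j - H x i j)
        * ((euclLength (y - x))⁻¹ • (y - x)) j ≤ 4 * ρ'' + 4 * δ := by
  have hyx : y - x ≠ 0 := sub_ne_zero.2 hxy.symm
  have hr := euclLength_pos hyx
  obtain ⟨hyΩ, hGy⟩ := mem_and_gradient_eq_of_max hΩ hconv hUc hU hG hneu hx₀ hx hy hxy.symm hδ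
    (hρ _ hr) hpos (fun z hz => by linarith [hmax x hx z hz])
  obtain ⟨hxΩ, hGx⟩ := mem_and_gradient_eq_of_max (V := fun x => - U x) (K := fun x => - G x)
    (ρ' := ρ' (euclLength (y - x))) (y := x) (a := y) hΩ hconv hUc.neg
    (fun x hx i => by simpa using (hU x hx i).fun_neg) hG.neg
    (fun y hy ν hν => by rw [neg_dotProduct, hneu y hy ν hν, neg_zero]) hx₀ hy hx hxy hδ
    (by rw [euclLength_sub_comm x y]; exact hρ _ hr) hpos
    (fun z hz => by
      rw [euclLength_sub_comm z y, euclLength_sub_comm x y]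
      linarith [hmax z hz y hy])
  have hmaxΩ : ∀ x' ∈ Ω, ∀ y' ∈ Ω, U y' - U x' - ρ (euclLength (y' - x'))
        - δ * ((y' - x₀) ⬝ᵥ (y' - x₀) + (x' - x₀) ⬝ᵥ (x' - x₀))
      ≤ U y - U x - ρ (euclLength (y - x))
        - δ * ((y - x₀) ⬝ᵥ (y - x₀) + (x - x₀) ⬝ᵥ (x - x₀)) :=
    fun x' hx' y' hy' => hmax x' (subset_closure hx') y' (subset_closure hy')
  have hρev : ∀ᶠ z in 𝓝 (euclLength (y - x)), HasDerivAt ρ (ρ' z) z := by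
    filter_upwards [lt_mem_nhds hr] with z hz using hρ z hz
  have hsplit : ∀ w : Fin n → ℝ, ∑ i, ∑ j, w i * (H y i j - H x i j) * w j
      = (∑ i, ∑ j, w i * H y i j * w j) - ∑ i, ∑ j, w i * H x i j * w j := fun w => by
    simp only [← Finset.sum_sub_distrib]
    exact Finset.sum_congr rfl fun i _ => Finset.sum_congr rfl fun j _ => by ring
  have hG' := hG.mono (subset_closure (s := Ω))
  have hH' := hH.mono (subset_closure (s := Ω))
  refine ⟨hxΩ, hyΩ, hGy, ?_, fun w => ?_, ?_⟩
  · have : G x = - (-G x) := (neg_neg _).symm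
    rw [this, hGx, euclLength_sub_comm x y, ← neg_sub y x]
    rw [smul_neg, smul_neg, neg_add, neg_neg, ← sub_eq_add_neg]
  · have := second_order_of_two_point_max (κ := 0) (ξ := w) (η := w) hΩ hU hGH hG' hH' hxΩ hyΩ
      hρev hρ' (Eventually.of_forall fun s => by simp) hmaxΩ
    rw [hsplit]
    linarith
  · set e := (euclLength (y - x))⁻¹ • (y - x) with he
    have hee : e ⬝ᵥ e = 1 := dotProduct_unit_self hyx
    have hyxe : y - x = euclLength (y - x) • e := by
      rw [he, smul_smul, mul_inv_cancel₀ hr.ne', one_smul]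
    have hle : euclLength e = 1 := by rw [euclLength_eq_sqrt_dotProduct, hee, Real.sqrt_one]
    have hlen : ∀ᶠ s : ℝ in 𝓝 0,
        euclLength (y + s • e - (x + s • (-e))) = euclLength (y - x) + 2 * s := by
      have hc : Continuous fun s : ℝ => euclLength (y - x) + 2 * s := by fun_prop
      have hev : ∀ᶠ s : ℝ in 𝓝 0, 0 < euclLength (y - x) + 2 * s :=
        (hc.tendsto 0).eventually (lt_mem_nhds (by simpa using hr))
      filter_upwards [hev] with s hs
      have : y + s • e - (x + s • (-e)) = (euclLength (y - x) + 2 * s) • e := by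
        rw [add_smul, ← hyxe, two_mul, add_smul, smul_neg]; abel
      rw [this, euclLength_smul_of_nonneg hs.le, hle, mul_one]
    have := second_order_of_two_point_max (κ := 2) (ξ := -e) (η := e) hΩ hU hGH hG' hH' hxΩ hyΩ
      hρev hρ' hlen hmaxΩ
    simp only [Pi.neg_apply, neg_mul, mul_neg, neg_neg, neg_dotProduct_neg, hee] at this
    rw [hsplit]
    linarith

/-- Classical solutions of the Neumann problem for `u_t = Σ A(Du)_{ij} D_{ij}u + b(Du,t)`,
with derivatives extending continuously to the closure of the domain. -/
structure IsNeumannSolution {n : ℕ} (T : ℝ) (Ω : Set (Fin n → ℝ))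
    (A : (Fin n → ℝ) → Fin n → Fin n → ℝ) (b : (Fin n → ℝ) → ℝ → ℝ)
    (u ut : (Fin n → ℝ) → ℝ → ℝ) (gu : (Fin n → ℝ) → ℝ → Fin n → ℝ)
    (hu : (Fin n → ℝ) → ℝ → Fin n → Fin n → ℝ) : Prop where
  continuousOn : ContinuousOn (fun z : (Fin n → ℝ) × ℝ => u z.1 z.2) (closure Ω ×ˢ Icc 0 T)
  time_deriv : ∀ x ∈ Ω, ∀ t ∈ Ioc (0 : ℝ) T,
    HasDerivWithinAt (fun s => u x s) (ut x t) (Ioc 0 T) t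
  grad : ∀ x ∈ Ω, ∀ t ∈ Ioc (0 : ℝ) T, ∀ i,
    HasDerivAt (fun s : ℝ => u (x + s • (Pi.single i 1 : Fin n → ℝ)) t) (gu x t i) 0
  hess : ∀ x ∈ Ω, ∀ t ∈ Ioc (0 : ℝ) T, ∀ i j,
    HasDerivAt (fun s : ℝ => gu (x + s • (Pi.single i 1 : Fin n → ℝ)) t j) (hu x t i j) 0
  time_deriv_cont : ContinuousOn (fun z : (Fin n → ℝ) × ℝ => ut z.1 z.2) (closure Ω ×ˢ Ioc 0 T)
  grad_cont : ContinuousOn (fun z : (Fin n → ℝ) × ℝ => gu z.1 z.2) (closure Ω ×ˢ Ioc 0 T)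
  hess_cont : ContinuousOn (fun z : (Fin n → ℝ) × ℝ => hu z.1 z.2) (closure Ω ×ˢ Ioc 0 T)
  pde : ∀ x ∈ Ω, ∀ t ∈ Ioc (0 : ℝ) T,
    ut x t = (∑ i, ∑ j, A (gu x t) i j * hu x t i j) + b (gu x t) t
  neumann : ∀ x ∈ frontier Ω, ∀ t ∈ Ioc (0 : ℝ) T, ∀ ν : Fin n → ℝ,
    (∀ y ∈ Ω, ν ⬝ᵥ (y - x) ≤ 0) → gu x t ⬝ᵥ ν = 0

/-- Barriers for the reduced equation `Φ_t = 4 a(Φ_z) Φ_{zz}` with initial value `M`. -/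
structure IsBarrier (M : ℝ) (a : ℝ → ℝ) (Φ Φt Φz Φzz : ℝ → ℝ → ℝ) : Prop where
  continuousOn : ContinuousOn (fun z : ℝ × ℝ => Φ z.1 z.2) (Ici 0 ×ˢ Ioi 0)
  time_deriv : ∀ z, 0 < z → ∀ t, 0 < t → HasDerivAt (fun s => Φ z s) (Φt z t) t
  deriv : ∀ z, 0 < z → ∀ t, 0 < t → HasDerivAt (fun w => Φ w t) (Φz z t) z
  second_deriv : ∀ z, 0 < z → ∀ t, 0 < t → HasDerivAt (fun w => Φz w t) (Φzz z t) z
  time_deriv_cont : ContinuousOn (fun z : ℝ × ℝ => Φt z.1 z.2) (Ioi 0 ×ˢ Ioi 0)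
  deriv_cont : ContinuousOn (fun z : ℝ × ℝ => Φz z.1 z.2) (Ioi 0 ×ˢ Ioi 0)
  second_deriv_cont : ContinuousOn (fun z : ℝ × ℝ => Φzz z.1 z.2) (Ioi 0 ×ˢ Ioi 0)
  deriv_pos : ∀ z, 0 < z → ∀ t, 0 < t → 0 < Φz z t
  pde : ∀ z, 0 < z → ∀ t, 0 < t → Φt z t = 4 * a (Φz z t) * Φzz z t
  initial : ∀ z, 0 < z → Tendsto (fun t => Φ z t) (𝓝[>] 0) (𝓝 M)
  zero : ∀ t, 0 < t → Φ 0 t = 0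

namespace IsBarrier

variable {M : ℝ} {a : ℝ → ℝ} {Φ Φt Φz Φzz : ℝ → ℝ → ℝ}

theorem monotoneOn (h : IsBarrier M a Φ Φt Φz Φzz) {t : ℝ} (ht : 0 < t) :
    MonotoneOn (fun z => Φ z t) (Ici 0) := by
  refine (strictMonoOn_of_deriv_pos (convex_Ici 0) ?_ ?_).monotoneOn
  · exact h.continuousOn.comp (f := fun z : ℝ => (z, t)) (by fun_prop) fun z hz => ⟨hz, ht⟩
  · intro z hz
    rw [interior_Ici] at hz
    rw [(h.deriv z hz t ht).deriv]
    exact h.deriv_pos z hz t ht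

theorem nonneg (h : IsBarrier M a Φ Φt Φz Φzz) {z t : ℝ} (hz : 0 ≤ z) (ht : 0 < t) :
    0 ≤ Φ z t := by
  have := h.monotoneOn ht self_mem_Ici hz hz
  simpa [h.zero t ht] using this

end IsBarrier

namespace IsNeumannSolution

variable {n : ℕ} {T M : ℝ} {Ω : Set (Fin n → ℝ)} {A : (Fin n → ℝ) → Fin n → Fin n → ℝ}
  {b : (Fin n → ℝ) → ℝ → ℝ} {u ut : (Fin n → ℝ) → ℝ → ℝ}
  {gu : (Fin n → ℝ) → ℝ → Fin n → ℝ} {hu : (Fin n → ℝ) → ℝ → Fin n → Fin n → ℝ}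
  {a : ℝ → ℝ} {Φ Φt Φz Φzz : ℝ → ℝ → ℝ}

/-- The equation holds up to the boundary. -/
theorem pde_of_mem_closure (hS : IsNeumannSolution T Ω A b u ut gu hu)
    (hA : ∀ i j, Continuous fun p => A p i j)
    (hb : ContinuousOn (fun z : (Fin n → ℝ) × ℝ => b z.1 z.2) (univ ×ˢ Icc 0 T))
    {x : Fin n → ℝ} (hx : x ∈ closure Ω) {t : ℝ} (ht : t ∈ Ioc 0 T) :
    ut x t = (∑ i, ∑ j, A (gu x t) i j * hu x t i j) + b (gu x t) t := by
  have hmaps : MapsTo (fun x : Fin n → ℝ => (x, t)) (closure Ω) (closure Ω ×ˢ Ioc 0 T) :=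
    fun x hx => ⟨hx, ht⟩
  have hpair : ContinuousOn (fun x : Fin n → ℝ => (x, t)) (closure Ω) := by fun_prop
  have h1 := hS.time_deriv_cont.comp hpair hmaps
  have h2 := hS.grad_cont.comp hpair hmaps
  have h3 := hS.hess_cont.comp hpair hmaps
  have h4 : ContinuousOn (fun x => b (gu x t) t) (closure Ω) :=
    hb.comp (f := fun x => (gu x t, t)) (h2.prodMk continuousOn_const)
      fun x _ => ⟨mem_univ _, Ioc_subset_Icc_self ht⟩
  have h5 : ContinuousOn
      (fun x => (∑ i, ∑ j, A (gu x t) i j * hu x t i j) + b (gu x t) t) (closure Ω) := by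
    refine ContinuousOn.add (continuousOn_finsetSum _ fun i _ =>
      continuousOn_finsetSum _ fun j _ => ContinuousOn.mul ?_ ?_) h4
    · exact (hA i j).comp_continuousOn h2
    · exact continuousOn_pi.1 (continuousOn_pi.1 h3 i) j
  have heq : EqOn (fun x => ut x t)
      (fun x => (∑ i, ∑ j, A (gu x t) i j * hu x t i j) + b (gu x t) t) Ω :=
    fun x hx => hS.pde x hx t ht
  exact heq.of_subset_closure h1 h5 subset_closure subset_rfl hx

/-- For short times the two-point function is small. -/
theorem exists_time_two_point_lt (hS : IsNeumannSolution T Ω A b u ut gu hu)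
    (hB : IsBarrier M a Φ Φt Φz Φzz) (hT : 0 < T) (hbdd : Bornology.IsBounded Ω)
    (hosc : ∀ x ∈ closure Ω, ∀ y ∈ closure Ω, u x 0 - u y 0 ≤ M) {c : ℝ} (hc : 0 < c) :
    ∃ t₀, 0 < t₀ ∧ ∀ t ∈ Ioc 0 t₀, t ≤ T → ∀ x ∈ closure Ω, ∀ y ∈ closure Ω,
      u y t - u x t - Φ (euclLength (y - x)) t < c := by
  have hK : IsCompact (closure Ω ×ˢ Icc (0 : ℝ) T) :=
    hbdd.isCompact_closure.prod isCompact_Icc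
  obtain ⟨d, hd, hdist⟩ := Metric.uniformContinuousOn_iff.1
    (hK.uniformContinuousOn_of_continuous hS.continuousOn) (c / 4) (by positivity)
  have hΦ : ∀ᶠ t in 𝓝[>] (0 : ℝ), M - c / 4 < Φ d t :=
    (hB.initial d hd).eventually (lt_mem_nhds (by linarith))
  obtain ⟨t₁, ht₁, hsub⟩ := mem_nhdsGT_iff_exists_Ioc_subset.1 hΦ
  refine ⟨min t₁ (d / 2), lt_min ht₁ (by positivity), fun t ht htT x hx y hy => ?_⟩
  have ht0 : 0 < t := ht.1
  have htI : t ∈ Icc 0 T := ⟨ht0.le, htT⟩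
  have h0I : (0 : ℝ) ∈ Icc 0 T := ⟨le_rfl, hT.le⟩
  have hΦ0 := hB.nonneg (Real.sqrt_nonneg (∑ i, (y - x) i ^ 2)) ht0
  change 0 ≤ Φ (euclLength (y - x)) t at hΦ0
  rcases lt_or_ge (dist y x) d with hlt | hge
  · have := hdist (y, t) ⟨hy, htI⟩ (x, t) ⟨hx, htI⟩
      (by rw [Prod.dist_eq, dist_self]; exact max_lt hlt hd)
    rw [Real.dist_eq] at this
    have := (abs_lt.1 this).2
    simp only at this
    linarith
  · have htd : dist t 0 < d := by
      rw [Real.dist_eq, sub_zero, abs_of_pos ht0]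
      have := ht.2.trans (min_le_right _ _)
      linarith
    have h1 : ∀ z ∈ closure Ω, |u z t - u z 0| < c / 4 := fun z hz => by
      have := hdist (z, t) ⟨hz, htI⟩ (z, 0) ⟨hz, h0I⟩
        (by rw [Prod.dist_eq, dist_self]; exact max_lt hd htd)
      rwa [Real.dist_eq] at this
    have h2 := (abs_lt.1 (h1 y hy)).2
    have h3 := (abs_lt.1 (h1 x hx)).1
    have h4 := hosc y hy x hx
    have hlen : d ≤ euclLength (y - x) := by
      rw [dist_eq_norm] at hge
      exact hge.trans (norm_le_euclLength _)
    have h5 : Φ d t ≤ Φ (euclLength (y - x)) t :=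
      hB.monotoneOn ht0 hd.le (hd.le.trans hlen) hlen
    have h6 : M - c / 4 < Φ d t := hsub ⟨ht0, ht.2.trans (min_le_left _ _)⟩
    linarith

/-- If the two-point estimate fails, the penalized two-point function has an interior positive
maximum, where first- and second-order conditions hold. -/
theorem exists_penalized_contact (hS : IsNeumannSolution T Ω A b u ut gu hu)
    (hB : IsBarrier M a Φ Φt Φz Φzz) (hT : 0 < T) (hΩ : IsOpen Ω) (hconv : Convex ℝ Ω)
    (hbdd : Bornology.IsBounded Ω)
    (hosc : ∀ x ∈ closure Ω, ∀ y ∈ closure Ω, u x 0 - u y 0 ≤ M)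
    {x₀ x₁ y₁ : Fin n → ℝ} {t₁ : ℝ} (hx₀ : x₀ ∈ Ω) (hx₁ : x₁ ∈ closure Ω) (hy₁ : y₁ ∈ closure Ω)
    (ht₁ : t₁ ∈ Ioc 0 T) (hpos : Φ (euclLength (y₁ - x₁)) t₁ < u y₁ t₁ - u x₁ t₁) :
    ∃ ε c t₀ δ₀ : ℝ, 0 < ε ∧ 0 < c ∧ 0 < t₀ ∧ 0 < δ₀ ∧ ∀ δ ∈ Ioo 0 δ₀,
      ∃ x ∈ closure Ω, ∃ y ∈ closure Ω, ∃ t ∈ Icc t₀ T, x ≠ y ∧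
        c ≤ u y t - u x t - Φ (euclLength (y - x)) t ∧
        gu y t = Φz (euclLength (y - x)) t • (euclLength (y - x))⁻¹ • (y - x)
          + (2 * δ) • (y - x₀) ∧
        gu x t = Φz (euclLength (y - x)) t • (euclLength (y - x))⁻¹ • (y - x)
          - (2 * δ) • (x - x₀) ∧
        ε ≤ ut y t - ut x t - Φt (euclLength (y - x)) t ∧
        (∀ w : Fin n → ℝ,
          ∑ i, ∑ j, w i * (hu y t i j - hu x t i j) * w j ≤ 4 * δ * (w ⬝ᵥ w)) ∧
        ∑ i, ∑ j, ((euclLength (y - x))⁻¹ • (y - x)) i * (hu y t i j - hu x t i j)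
          * ((euclLength (y - x))⁻¹ • (y - x)) j ≤ 4 * Φzz (euclLength (y - x)) t + 4 * δ := by
  set m := u y₁ t₁ - u x₁ t₁ - Φ (euclLength (y₁ - x₁)) t₁ with hm
  have hm0 : 0 < m := sub_pos.2 hpos
  set q := (y₁ - x₀) ⬝ᵥ (y₁ - x₀) + (x₁ - x₀) ⬝ᵥ (x₁ - x₀) with hq
  have hq0 : 0 ≤ q :=
    add_nonneg (dotProduct_self_nonneg_real _) (dotProduct_self_nonneg_real _)
  obtain ⟨t₀, ht₀, hsmall⟩ := hS.exists_time_two_point_lt hB hT hbdd hosc (half_pos hm0)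
  have ht₀₁ : t₀ < t₁ := by
    by_contra! hle
    have := hsmall t₁ ⟨ht₁.1, hle⟩ ht₁.2 x₁ hx₁ y₁ hy₁
    linarith
  refine ⟨m / (4 * T), m / 2, t₀, m / (4 * (q + 1)), by positivity, by positivity, ht₀,
    by positivity, fun δ hδ => ?_⟩
  set ε := m / (4 * T) with hε
  have hε0 : 0 < ε := by positivity
  have hδ0 : 0 < δ := hδ.1
  have hεt : ε * t₁ ≤ m / 4 := by
    calc ε * t₁ ≤ ε * T := by gcongr; exact ht₁.2
      _ = m / 4 := by rw [hε]; field_simp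
  have hδq : δ * q ≤ m / 4 := by
    have h1 : δ * (4 * (q + 1)) < m := (lt_div_iff₀ (by positivity)).1 hδ.2
    nlinarith
  have hsubI : Icc t₀ T ⊆ Ioc 0 T := fun t ht => ⟨ht₀.trans_le ht.1, ht.2⟩
  let Z : ((Fin n → ℝ) × (Fin n → ℝ)) × ℝ → ℝ := fun p =>
    u p.1.2 p.2 - u p.1.1 p.2 - Φ (euclLength (p.1.2 - p.1.1)) p.2
      - δ * ((p.1.2 - x₀) ⬝ᵥ (p.1.2 - x₀) + (p.1.1 - x₀) ⬝ᵥ (p.1.1 - x₀)) - ε * p.2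
  have hZc : ContinuousOn Z ((closure Ω ×ˢ closure Ω) ×ˢ Icc t₀ T) := by
    have h1 : ContinuousOn (fun p : ((Fin n → ℝ) × (Fin n → ℝ)) × ℝ => u p.1.2 p.2)
        ((closure Ω ×ˢ closure Ω) ×ˢ Icc t₀ T) :=
      hS.continuousOn.comp (f := fun p : ((Fin n → ℝ) × (Fin n → ℝ)) × ℝ => (p.1.2, p.2))
        (by fun_prop) fun p hp => ⟨hp.1.2, Ioc_subset_Icc_self (hsubI hp.2)⟩
    have h2 : ContinuousOn (fun p : ((Fin n → ℝ) × (Fin n → ℝ)) × ℝ => u p.1.1 p.2)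
        ((closure Ω ×ˢ closure Ω) ×ˢ Icc t₀ T) :=
      hS.continuousOn.comp (f := fun p : ((Fin n → ℝ) × (Fin n → ℝ)) × ℝ => (p.1.1, p.2))
        (by fun_prop) fun p hp => ⟨hp.1.1, Ioc_subset_Icc_self (hsubI hp.2)⟩
    have hlen : Continuous fun p : ((Fin n → ℝ) × (Fin n → ℝ)) × ℝ =>
        euclLength (p.1.2 - p.1.1) := continuous_euclLength.comp (by fun_prop)
    have h3 : ContinuousOn (fun p : ((Fin n → ℝ) × (Fin n → ℝ)) × ℝ =>
        Φ (euclLength (p.1.2 - p.1.1)) p.2) ((closure Ω ×ˢ closure Ω) ×ˢ Icc t₀ T) :=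
      hB.continuousOn.comp (f := fun p : ((Fin n → ℝ) × (Fin n → ℝ)) × ℝ =>
          (euclLength (p.1.2 - p.1.1), p.2))
        (hlen.prodMk continuous_snd).continuousOn
        fun p hp => ⟨Real.sqrt_nonneg _, ht₀.trans_le hp.2.1⟩
    have h4 : Continuous fun p : ((Fin n → ℝ) × (Fin n → ℝ)) × ℝ =>
        δ * ((p.1.2 - x₀) ⬝ᵥ (p.1.2 - x₀) + (p.1.1 - x₀) ⬝ᵥ (p.1.1 - x₀)) := by
      unfold dotProduct; fun_prop
    exact (((h1.sub h2).sub h3).sub h4.continuousOn).sub (by fun_prop)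
  obtain ⟨⟨⟨x, y⟩, t⟩, ⟨⟨hx, hy⟩, ht⟩, hmax⟩ :=
    ((hbdd.isCompact_closure.prod hbdd.isCompact_closure).prod isCompact_Icc).exists_isMaxOn
      ⟨((x₁, y₁), t₁), ⟨hx₁, hy₁⟩, ht₀₁.le, ht₁.2⟩ hZc
  simp only at hx hy ht
  have hZ : ∀ x' ∈ closure Ω, ∀ y' ∈ closure Ω, ∀ t' ∈ Icc t₀ T,
      u y' t' - u x' t' - Φ (euclLength (y' - x')) t'
        - δ * ((y' - x₀) ⬝ᵥ (y' - x₀) + (x' - x₀) ⬝ᵥ (x' - x₀)) - ε * t'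
      ≤ u y t - u x t - Φ (euclLength (y - x)) t
        - δ * ((y - x₀) ⬝ᵥ (y - x₀) + (x - x₀) ⬝ᵥ (x - x₀)) - ε * t :=
    fun x' hx' y' hy' t' ht' =>
      isMaxOn_iff.1 hmax ((x', y'), t') ⟨⟨hx', hy'⟩, ht'⟩
  have ht0 : 0 < t := ht₀.trans_le ht.1
  have hc : m / 2 ≤ u y t - u x t - Φ (euclLength (y - x)) t := by
    have h1 := hZ x₁ hx₁ y₁ hy₁ t₁ ⟨ht₀₁.le, ht₁.2⟩
    have h2 : 0 ≤ δ * ((y - x₀) ⬝ᵥ (y - x₀) + (x - x₀) ⬝ᵥ (x - x₀)) :=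
      mul_nonneg hδ0.le
        (add_nonneg (dotProduct_self_nonneg_real _) (dotProduct_self_nonneg_real _))
    have h3 : 0 ≤ ε * t := by positivity
    linarith
  have hxy : x ≠ y := by
    rintro rfl
    rw [sub_self, sub_self, euclLength_zero, hB.zero t ht0] at hc
    linarith
  have htlt : t₀ < t := by
    by_contra! hle
    have := hsmall t ⟨ht0, hle⟩ ht.2 x hx y hy
    linarith
  have htI : t ∈ Ioc 0 T := hsubI ht
  have hr : 0 < euclLength (y - x) := euclLength_pos (sub_ne_zero.2 hxy.symm)
  have hpair : ContinuousOn (fun x : Fin n → ℝ => (x, t)) (closure Ω) := by fun_prop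
  have hmaps : MapsTo (fun x : Fin n → ℝ => (x, t)) (closure Ω) (closure Ω ×ˢ Ioc 0 T) :=
    fun x hx => ⟨hx, htI⟩
  obtain ⟨hxΩ, hyΩ, hgy, hgx, hw, he⟩ := two_point_max_conditions (U := fun x => u x t)
    (G := fun x => gu x t) (H := fun x => hu x t) (ρ := fun z => Φ z t)
    (ρ' := fun z => Φz z t) hΩ hconv
    (hS.continuousOn.comp hpair fun x hx => ⟨hx, Ioc_subset_Icc_self htI⟩)
    (fun x hx i => hS.grad x hx t htI i) (fun x hx i j => hS.hess x hx t htI i j)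
    (hS.grad_cont.comp hpair hmaps) (hS.hess_cont.comp hpair hmaps)
    (fun y hy ν hν => hS.neumann y hy t htI ν hν) hx₀ hx hy hxy hδ0
    (fun z hz => hB.deriv z hz t ht0) (hB.second_deriv _ hr t ht0) (hB.deriv_pos _ hr t ht0)
    (fun x' hx' y' hy' => by linarith [hZ x' hx' y' hy' t ht])
  refine ⟨x, hx, y, hy, t, ht, hxy, hc, hgy, hgx, ?_, hw, he⟩
  have hnhds : Ioc 0 T ∈ 𝓝[<] t :=
    mem_of_superset (Ioo_mem_nhdsLT ht0) fun s hs => ⟨hs.1, hs.2.le.trans ht.2⟩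
  have hd1 := (hS.time_deriv y hyΩ t htI).mono_of_mem_nhdsWithin hnhds
  have hd2 := (hS.time_deriv x hxΩ t htI).mono_of_mem_nhdsWithin hnhds
  have hd3 := (hB.time_deriv _ hr t ht0).hasDerivWithinAt (s := Iio t)
  have hd4 := ((hasDerivAt_id t).const_mul ε).hasDerivWithinAt (s := Iio t)
  have := (((hd1.sub hd2).sub hd3).sub hd4).nonneg_of_forall_le htlt fun s hs => by
    have := hZ x hx y hy s ⟨hs.1.le, hs.2.le.trans ht.2⟩
    simp only [Pi.sub_apply, id]
    linarith
  linarith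

/-- If the two-point estimate fails, there is a pair of points where `u` has the same gradient,
and where the first- and second-order conditions of a strict contact hold. -/
theorem exists_contact (hS : IsNeumannSolution T Ω A b u ut gu hu)
    (hB : IsBarrier M a Φ Φt Φz Φzz) (hT : 0 < T) (hΩ : IsOpen Ω) (hconv : Convex ℝ Ω)
    (hbdd : Bornology.IsBounded Ω)
    (hosc : ∀ x ∈ closure Ω, ∀ y ∈ closure Ω, u x 0 - u y 0 ≤ M)
    {x₁ y₁ : Fin n → ℝ} {t₁ : ℝ} (hx₁ : x₁ ∈ closure Ω) (hy₁ : y₁ ∈ closure Ω)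
    (ht₁ : t₁ ∈ Ioc 0 T) (hpos : Φ (euclLength (y₁ - x₁)) t₁ < u y₁ t₁ - u x₁ t₁) :
    ∃ x ∈ closure Ω, ∃ y ∈ closure Ω, ∃ t ∈ Ioc 0 T, x ≠ y ∧
      gu y t = Φz (euclLength (y - x)) t • (euclLength (y - x))⁻¹ • (y - x) ∧
      gu x t = Φz (euclLength (y - x)) t • (euclLength (y - x))⁻¹ • (y - x) ∧
      0 < ut y t - ut x t - Φt (euclLength (y - x)) t ∧
      (∀ w : Fin n → ℝ, ∑ i, ∑ j, w i * (hu y t i j - hu x t i j) * w j ≤ 0) ∧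
      ∑ i, ∑ j, ((euclLength (y - x))⁻¹ • (y - x)) i * (hu y t i j - hu x t i j)
        * ((euclLength (y - x))⁻¹ • (y - x)) j ≤ 4 * Φzz (euclLength (y - x)) t := by
  obtain ⟨x₀, hx₀⟩ : Ω.Nonempty := closure_nonempty_iff.1 ⟨x₁, hx₁⟩
  obtain ⟨ε, c, t₀, δ₀, hε, hc, ht₀, hδ₀, hcontact⟩ :=
    hS.exists_penalized_contact hB hT hΩ hconv hbdd hosc hx₀ hx₁ hy₁ ht₁ hpos
  have hsubI : Icc t₀ T ⊆ Ioc 0 T := fun t ht => ⟨ht₀.trans_le ht.1, ht.2⟩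
  obtain ⟨δ, -, hδI, hδlim⟩ := exists_seq_strictAnti_tendsto' hδ₀
  choose X hX Y hY S hS' hne hZ hgy hgx hut hw he using fun k => hcontact (δ k) (hδI k)
  obtain ⟨⟨⟨x, y⟩, t⟩, ⟨⟨hx, hy⟩, ht⟩, ψ, hψ, hlim⟩ :=
    ((hbdd.isCompact_closure.prod hbdd.isCompact_closure).prod
      (isCompact_Icc (a := t₀) (b := T))).tendsto_subseq (x := fun k => ((X k, Y k), S k))
      fun k => ⟨⟨hX k, hY k⟩, hS' k⟩
  simp only at hx hy ht
  have hδψ : Tendsto (fun k => δ (ψ k)) atTop (𝓝 0) := hδlim.comp hψ.tendsto_atTop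
  have hxl : Tendsto (fun k => X (ψ k)) atTop (𝓝 x) := (hlim.fst_nhds).fst_nhds
  have hyl : Tendsto (fun k => Y (ψ k)) atTop (𝓝 y) := (hlim.fst_nhds).snd_nhds
  have htl : Tendsto (fun k => S (ψ k)) atTop (𝓝 t) := hlim.snd_nhds
  have htI := hsubI ht
  have hrl : Tendsto (fun k => euclLength (Y (ψ k) - X (ψ k))) atTop (𝓝 (euclLength (y - x))) :=
    (continuous_euclLength.tendsto _).comp (hyl.sub hxl)
  have hylim : Tendsto (fun k => (Y (ψ k), S (ψ k))) atTop (𝓝[closure Ω ×ˢ Ioc 0 T] (y, t)) :=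
    tendsto_nhdsWithin_iff.2 ⟨hyl.prodMk_nhds htl,
      Eventually.of_forall fun k => ⟨hY _, hsubI (hS' _)⟩⟩
  have hxlim : Tendsto (fun k => (X (ψ k), S (ψ k))) atTop (𝓝[closure Ω ×ˢ Ioc 0 T] (x, t)) :=
    tendsto_nhdsWithin_iff.2 ⟨hxl.prodMk_nhds htl,
      Eventually.of_forall fun k => ⟨hX _, hsubI (hS' _)⟩⟩
  have hxt : (x, t) ∈ closure Ω ×ˢ Ioc 0 T := ⟨hx, htI⟩
  have hyt : (y, t) ∈ closure Ω ×ˢ Ioc 0 T := ⟨hy, htI⟩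
  have hu' := hS.continuousOn.mono (prod_mono_right (s := closure Ω) (Ioc_subset_Icc_self (a := 0) (b := T)))
  have hxy : x ≠ y := by
    rintro rfl
    have h1 : Tendsto (fun k => u (Y (ψ k)) (S (ψ k)) - u (X (ψ k)) (S (ψ k))
        - Φ (euclLength (Y (ψ k) - X (ψ k))) (S (ψ k))) atTop
        (𝓝 (u x t - u x t - Φ (euclLength (x - x)) t)) := by
      refine (((hu' _ hyt).tendsto.comp hylim).sub ((hu' _ hxt).tendsto.comp hxlim)).sub ?_
      refine (hB.continuousOn (euclLength (x - x), t)
        ⟨Real.sqrt_nonneg _, htI.1⟩).tendsto.comp (tendsto_nhdsWithin_iff.2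
        ⟨hrl.prodMk_nhds htl, Eventually.of_forall fun k => ⟨Real.sqrt_nonneg _, ?_⟩⟩)
      exact (hsubI (hS' _)).1
    have h2 := ge_of_tendsto' h1 fun k => hZ (ψ k)
    rw [sub_self, sub_self, euclLength_zero, hB.zero t htI.1] at h2
    linarith
  have hr : 0 < euclLength (y - x) := euclLength_pos (sub_ne_zero.2 hxy.symm)
  have hrlim : Tendsto (fun k => (euclLength (Y (ψ k) - X (ψ k)), S (ψ k))) atTop
      (𝓝[Ioi 0 ×ˢ Ioi 0] (euclLength (y - x), t)) :=
    tendsto_nhdsWithin_iff.2 ⟨hrl.prodMk_nhds htl, Eventually.of_forall fun k =>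
      ⟨euclLength_pos (sub_ne_zero.2 (hne _).symm), (hsubI (hS' _)).1⟩⟩
  have hrt : (euclLength (y - x), t) ∈ Ioi (0 : ℝ) ×ˢ Ioi (0 : ℝ) := ⟨hr, htI.1⟩
  have hel : Tendsto (fun k => (euclLength (Y (ψ k) - X (ψ k)))⁻¹ • (Y (ψ k) - X (ψ k))) atTop
      (𝓝 ((euclLength (y - x))⁻¹ • (y - x))) := (hrl.inv₀ hr.ne').smul (hyl.sub hxl)
  have hpl := ((hB.deriv_cont _ hrt).tendsto.comp hrlim).smul hel
  have hHl : ∀ i j, Tendsto (fun k => hu (Y (ψ k)) (S (ψ k)) i j - hu (X (ψ k)) (S (ψ k)) i j)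
      atTop (𝓝 (hu y t i j - hu x t i j)) := fun i j => by
    have h1 := (hS.hess_cont _ hyt).tendsto.comp hylim
    have h2 := (hS.hess_cont _ hxt).tendsto.comp hxlim
    exact (tendsto_pi_nhds.1 (tendsto_pi_nhds.1 h1 i) j).sub
      (tendsto_pi_nhds.1 (tendsto_pi_nhds.1 h2 i) j)
  refine ⟨x, hx, y, hy, t, htI, hxy, ?_, ?_, ?_, fun w => ?_, ?_⟩
  · have h1 := hpl.add ((hδψ.const_mul 2).smul (hyl.sub_const x₀))
    rw [mul_zero, zero_smul, add_zero] at h1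
    exact tendsto_nhds_unique ((hS.grad_cont _ hyt).tendsto.comp hylim)
      (h1.congr fun k => (hgy (ψ k)).symm)
  · have h1 := hpl.sub ((hδψ.const_mul 2).smul (hxl.sub_const x₀))
    rw [mul_zero, zero_smul, sub_zero] at h1
    exact tendsto_nhds_unique ((hS.grad_cont _ hxt).tendsto.comp hxlim)
      (h1.congr fun k => (hgx (ψ k)).symm)
  · have h1 := (((hS.time_deriv_cont _ hyt).tendsto.comp hylim).sub
      ((hS.time_deriv_cont _ hxt).tendsto.comp hxlim)).sub
      ((hB.time_deriv_cont _ hrt).tendsto.comp hrlim)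
    exact hε.trans_le (ge_of_tendsto' h1 fun k => hut (ψ k))
  · have h1 : Tendsto (fun k => ∑ i, ∑ j,
        w i * (hu (Y (ψ k)) (S (ψ k)) i j - hu (X (ψ k)) (S (ψ k)) i j) * w j) atTop
        (𝓝 (∑ i, ∑ j, w i * (hu y t i j - hu x t i j) * w j)) :=
      tendsto_finsetSum _ fun i _ => tendsto_finsetSum _ fun j _ =>
        ((hHl i j).const_mul (w i)).mul_const (w j)
    have h2 := (hδψ.const_mul 4).mul_const (w ⬝ᵥ w)
    rw [mul_zero, zero_mul] at h2
    exact le_of_tendsto_of_tendsto' h1 h2 fun k => hw (ψ k) w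
  · have hei := tendsto_pi_nhds.1 hel
    have h1 := tendsto_finsetSum Finset.univ fun i _ => tendsto_finsetSum Finset.univ fun j _ =>
        ((hei i).mul (hHl i j)).mul (hei j)
    have h2 := (((hB.second_deriv_cont _ hrt).tendsto.comp hrlim).const_mul 4).add
      (hδψ.const_mul 4)
    rw [mul_zero, add_zero] at h2
    exact le_of_tendsto_of_tendsto' h1 h2 fun k => he (ψ k)

end IsNeumannSolution

/-- The quadratic form of `A(p)` dominates `α(p)` times the square of the component along `p`. -/
theorem ellipticity_lower_bound {n : ℕ} {B : Fin n → Fin n → ℝ}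
    (hB : ∀ v : Fin n → ℝ, 0 ≤ ∑ i, ∑ j, v i * B i j * v j) (p v : Fin n → ℝ) :
    (∑ i, p i ^ 2) *
        sInf {r : ℝ | ∃ v : Fin n → ℝ, (∑ i, v i * p i) ≠ 0 ∧
          r = (∑ i, ∑ j, v i * B i j * v j) / (∑ i, v i * p i) ^ 2} * (v ⬝ᵥ p) ^ 2
      ≤ (p ⬝ᵥ p) * ∑ i, ∑ j, v i * B i j * v j := by
  have hpp : ∑ i, p i ^ 2 = p ⬝ᵥ p := by simp [dotProduct, pow_two]
  rw [hpp, mul_assoc]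
  refine mul_le_mul_of_nonneg_left ?_ (dotProduct_self_nonneg_real p)
  by_cases hv : v ⬝ᵥ p = 0
  · rw [hv]
    simpa using hB v
  · rw [← le_div_iff₀ (by positivity)]
    refine csInf_le ⟨0, ?_⟩ ⟨v, hv, rfl⟩
    rintro r ⟨v, -, rfl⟩
    exact div_nonneg (hB v) (sq_nonneg _)

/-- Two-point estimate for Neumann solutions by a barrier of the reduced equation. -/
theorem IsNeumannSolution.two_point_le {n : ℕ} {T M : ℝ} {Ω : Set (Fin n → ℝ)}
    {A : (Fin n → ℝ) → Fin n → Fin n → ℝ} {b : (Fin n → ℝ) → ℝ → ℝ}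
    {u ut : (Fin n → ℝ) → ℝ → ℝ} {gu : (Fin n → ℝ) → ℝ → Fin n → ℝ}
    {hu : (Fin n → ℝ) → ℝ → Fin n → Fin n → ℝ} {a : ℝ → ℝ} {Φ Φt Φz Φzz : ℝ → ℝ → ℝ}
    (hS : IsNeumannSolution T Ω A b u ut gu hu)
    (hB : IsBarrier M a Φ Φt Φz Φzz) (hT : 0 < T) (hΩ : IsOpen Ω) (hconv : Convex ℝ Ω)
    (hbdd : Bornology.IsBounded Ω)
    (hA : ∀ i j, Continuous fun p => A p i j) (hA_symm : ∀ p i j, A p i j = A p j i)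
    (hA_psd : ∀ p v : Fin n → ℝ, 0 ≤ ∑ i, ∑ j, v i * A p i j * v j)
    (hb : ContinuousOn (fun z : (Fin n → ℝ) × ℝ => b z.1 z.2) (univ ×ˢ Icc 0 T))
    (ha_pos : ∀ s : ℝ, 0 < s → 0 < a s)
    (ha : ∀ p : Fin n → ℝ, p ≠ 0 →
      (∑ i, p i ^ 2) *
        sInf {r : ℝ | ∃ v : Fin n → ℝ, (∑ i, v i * p i) ≠ 0 ∧
          r = (∑ i, ∑ j, v i * A p i j * v j) / (∑ i, v i * p i) ^ 2} = a (euclLength p))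
    (hosc : ∀ x ∈ closure Ω, ∀ y ∈ closure Ω, u x 0 - u y 0 ≤ M)
    {x y : Fin n → ℝ} (hx : x ∈ closure Ω) (hy : y ∈ closure Ω) {t : ℝ} (ht : t ∈ Ioc 0 T) :
    u y t - u x t ≤ Φ (euclLength (y - x)) t := by
  by_contra! hpos
  obtain ⟨x, hx, y, hy, t, ht, hxy, hgy, hgx, hut, hw, he⟩ :=
    hS.exists_contact hB hT hΩ hconv hbdd hosc hx hy ht hpos
  have hyx : y - x ≠ 0 := sub_ne_zero.2 hxy.symm
  have hr := euclLength_pos hyx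
  set r := euclLength (y - x) with hr_def
  set e := r⁻¹ • (y - x) with he_def
  have hee : e ⬝ᵥ e = 1 := dotProduct_unit_self hyx
  have hc : 0 < Φz r t := hB.deriv_pos r hr t ht.1
  set c := Φz r t with hc_def
  have hlen : euclLength (c • e) = c := by
    rw [euclLength_smul_of_nonneg hc.le, euclLength_eq_sqrt_dotProduct, hee, Real.sqrt_one,
      mul_one]
  have hp0 : c • e ≠ 0 := by
    intro h
    rw [h, euclLength_zero] at hlen
    exact hc.ne hlen
  have hα : ∀ v : Fin n → ℝ,
      a c * (v ⬝ᵥ e) ^ 2 ≤ ∑ i, ∑ j, v i * A (c • e) i j * v j := by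
    intro v
    have h1 := ellipticity_lower_bound (hA_psd (c • e)) (c • e) v
    rw [ha _ hp0, hlen] at h1
    simp only [smul_dotProduct, dotProduct_smul, hee, smul_eq_mul, mul_one] at h1
    have h2 : 0 < c * c := by positivity
    nlinarith
  have htr : ∑ i, ∑ j, (A (c • e) i j - a c * (e i * e j)) * (hu y t i j - hu x t i j) ≤ 0 := by
    refine sum_mul_nonpos_of_posSemidef (fun i j => ?_) (fun v => ?_) hw
    · rw [hA_symm, mul_comm (e i)]
    · have h1 : ∑ i, ∑ j, v i * (A (c • e) i j - a c * (e i * e j)) * v j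
          = (∑ i, ∑ j, v i * A (c • e) i j * v j) - a c * (v ⬝ᵥ e) ^ 2 := by
        rw [pow_two, dotProduct, Finset.sum_mul_sum, Finset.mul_sum, ← Finset.sum_sub_distrib]
        refine Finset.sum_congr rfl fun i _ => ?_
        rw [Finset.mul_sum, ← Finset.sum_sub_distrib]
        exact Finset.sum_congr rfl fun j _ => by ring
      rw [h1]
      exact sub_nonneg.2 (hα v)
  have hsplit : ∑ i, ∑ j, (A (c • e) i j - a c * (e i * e j)) * (hu y t i j - hu x t i j)
      = (∑ i, ∑ j, A (c • e) i j * hu y t i j) - (∑ i, ∑ j, A (c • e) i j * hu x t i j)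
        - a c * ∑ i, ∑ j, e i * (hu y t i j - hu x t i j) * e j := by
    rw [Finset.mul_sum, ← Finset.sum_sub_distrib, ← Finset.sum_sub_distrib]
    refine Finset.sum_congr rfl fun i _ => ?_
    rw [Finset.mul_sum, ← Finset.sum_sub_distrib, ← Finset.sum_sub_distrib]
    exact Finset.sum_congr rfl fun j _ => by ring
  have hpy := hS.pde_of_mem_closure hA hb hy ht
  have hpx := hS.pde_of_mem_closure hA hb hx ht
  rw [hgy] at hpy
  rw [hgx] at hpx
  have hΦ := hB.pde r hr t ht.1
  have hmul := mul_le_mul_of_nonneg_left he (ha_pos c hc).le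
  linarith

/-- Parabolic rescaling of a normalized barrier. -/
theorem isBarrier_rescale {M : ℝ} (hM : 0 < M) {αt : ℝ → ℝ} {φ φt φz φzz : ℝ → ℝ → ℝ}
    (hφ : IsBarrier 1 αt φ φt φz φzz) :
    IsBarrier M αt (fun z t => M * φ (z / M) (t / M ^ 2)) (fun z t => M⁻¹ * φt (z / M) (t / M ^ 2))
      (fun z t => φz (z / M) (t / M ^ 2)) (fun z t => M⁻¹ * φzz (z / M) (t / M ^ 2)) := by
  have hMne := hM.ne'
  have hM2 : 0 < M ^ 2 := by positivity
  have hscale : Continuous fun z : ℝ × ℝ => (z.1 / M, z.2 / M ^ 2) := by fun_prop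
  have hmaps : MapsTo (fun z : ℝ × ℝ => (z.1 / M, z.2 / M ^ 2)) (Ioi 0 ×ˢ Ioi 0)
      (Ioi 0 ×ˢ Ioi 0) := fun z hz => ⟨div_pos hz.1 hM, div_pos hz.2 hM2⟩
  have hdiv : ∀ c z : ℝ, HasDerivAt (fun z : ℝ => z / c) (1 / c) z := fun c z =>
    (hasDerivAt_id z).div_const c
  refine ⟨?_, ?_, ?_, ?_, ?_, ?_, ?_, ?_, ?_, ?_, ?_⟩
  · exact continuousOn_const.mul (hφ.continuousOn.comp hscale.continuousOn
      fun z hz => ⟨div_nonneg hz.1 hM.le, div_pos hz.2 hM2⟩)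
  · intro z hz t ht
    have h := ((hφ.time_deriv _ (div_pos hz hM) _ (div_pos ht hM2)).comp t
      (hdiv (M ^ 2) t)).const_mul M
    exact h.congr_deriv (by field_simp)
  · intro z hz t ht
    have h := ((hφ.deriv _ (div_pos hz hM) _ (div_pos ht hM2)).comp z (hdiv M z)).const_mul M
    exact h.congr_deriv (by field_simp)
  · intro z hz t ht
    have h := (hφ.second_deriv _ (div_pos hz hM) _ (div_pos ht hM2)).comp z (hdiv M z)
    exact h.congr_deriv (by field_simp)
  · exact continuousOn_const.mul (hφ.time_deriv_cont.comp hscale.continuousOn hmaps)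
  · exact hφ.deriv_cont.comp hscale.continuousOn hmaps
  · exact continuousOn_const.mul (hφ.second_deriv_cont.comp hscale.continuousOn hmaps)
  · exact fun z hz t ht => hφ.deriv_pos _ (div_pos hz hM) _ (div_pos ht hM2)
  · intro z hz t ht
    rw [hφ.pde _ (div_pos hz hM) _ (div_pos ht hM2)]
    ring
  · intro z hz
    have hlim : Tendsto (fun t : ℝ => t / M ^ 2) (𝓝[>] 0) (𝓝[>] 0) := by
      refine tendsto_nhdsWithin_iff.2 ⟨?_, ?_⟩
      · have : Continuous fun t : ℝ => t / M ^ 2 := by fun_prop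
        simpa using (this.tendsto 0).mono_left nhdsWithin_le_nhds
      · filter_upwards [self_mem_nhdsWithin] with t ht using div_pos ht hM2
    simpa using ((hφ.initial _ (div_pos hz hM)).comp hlim).const_mul M
  · intro t ht
    rw [zero_div, hφ.zero _ (div_pos ht hM2), mul_zero]

/-- Modulus-of-continuity estimate for solutions of the Neumann
problem for `u_t = Σ A(Du)_{ij} D_{ij}u + b(Du,t)` on a convex domain, via a
barrier for the reduced equation `φ_t = 4 α̃(|φ_z|) φ_{zz}`. -/
theorem neumann_modulus_estimate_higher_dim
    (n : ℕ) (hn : 1 ≤ n) (T M : ℝ) (hT : 0 < T) (hM : 0 < M)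
    (Ω : Set (Fin n → ℝ)) (hΩ_open : IsOpen Ω) (hΩ_bdd : Bornology.IsBounded Ω)
    (hΩ_conv : Convex ℝ Ω)
    (A : (Fin n → ℝ) → Fin n → Fin n → ℝ)
    (hA_smooth : ∀ i j : Fin n, ContDiff ℝ (⊤ : ℕ∞) (fun p : Fin n → ℝ => A p i j))
    (hA_symm : ∀ p : Fin n → ℝ, ∀ i j, A p i j = A p j i)
    (hA_psd : ∀ p v : Fin n → ℝ, 0 ≤ ∑ i, ∑ j, v i * A p i j * v j)
    (b : (Fin n → ℝ) → ℝ → ℝ)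
    (hb_cont : ContinuousOn (fun z : (Fin n → ℝ) × ℝ => b z.1 z.2)
      (Set.univ ×ˢ Set.Icc 0 T))
    (αt : ℝ → ℝ) (hαt_pos : ∀ s : ℝ, 0 < s → 0 < αt s)
    (hα : ∀ p : Fin n → ℝ, p ≠ 0 →
      (∑ i, p i ^ 2) *
        sInf {r : ℝ | ∃ v : Fin n → ℝ, (∑ i, v i * p i) ≠ 0 ∧
          r = (∑ i, ∑ j, v i * A p i j * v j) / (∑ i, v i * p i) ^ 2}
        = αt (Real.sqrt (∑ i, p i ^ 2)))
    (u ut : (Fin n → ℝ) → ℝ → ℝ)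
    (gu : (Fin n → ℝ) → ℝ → Fin n → ℝ)
    (hu : (Fin n → ℝ) → ℝ → Fin n → Fin n → ℝ)
    (hu_cont : ContinuousOn (fun z : (Fin n → ℝ) × ℝ => u z.1 z.2)
      (closure Ω ×ˢ Set.Icc 0 T))
    (hut : ∀ x ∈ Ω, ∀ t ∈ Set.Ioc (0:ℝ) T,
      HasDerivWithinAt (fun s => u x s) (ut x t) (Set.Ioc 0 T) t)
    (hgu : ∀ x ∈ Ω, ∀ t ∈ Set.Ioc (0:ℝ) T, ∀ i,
      HasDerivAt (fun s : ℝ => u (x + s • (Pi.single i 1 : Fin n → ℝ)) t) (gu x t i) 0)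
    (hhu : ∀ x ∈ Ω, ∀ t ∈ Set.Ioc (0:ℝ) T, ∀ i j,
      HasDerivAt (fun s : ℝ => gu (x + s • (Pi.single i 1 : Fin n → ℝ)) t j) (hu x t i j) 0)
    (hut_cont : ContinuousOn (fun z : (Fin n → ℝ) × ℝ => ut z.1 z.2)
      (closure Ω ×ˢ Set.Ioc 0 T))
    (hgu_cont : ContinuousOn (fun z : (Fin n → ℝ) × ℝ => gu z.1 z.2)
      (closure Ω ×ˢ Set.Ioc 0 T))
    (hhu_cont : ContinuousOn (fun z : (Fin n → ℝ) × ℝ => hu z.1 z.2)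
      (closure Ω ×ˢ Set.Ioc 0 T))
    (hpde : ∀ x ∈ Ω, ∀ t ∈ Set.Ioc (0:ℝ) T,
      ut x t = (∑ i, ∑ j, A (gu x t) i j * hu x t i j) + b (gu x t) t)
    (hneumann : ∀ x ∈ frontier Ω, ∀ t ∈ Set.Ioc (0:ℝ) T, ∀ ν : Fin n → ℝ,
      (∀ y ∈ Ω, (∑ i, ν i * (y i - x i)) ≤ 0) → (∑ i, gu x t i * ν i) = 0)
    (hosc : ∀ x ∈ closure Ω, ∀ y ∈ closure Ω, u x 0 - u y 0 ≤ M)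
    (φ φt φz φzz : ℝ → ℝ → ℝ)
    (hφ_cont : ContinuousOn (fun z : ℝ × ℝ => φ z.1 z.2) (Set.Ici 0 ×ˢ Set.Ioi 0))
    (hφt : ∀ z ∈ Set.Ioi (0:ℝ), ∀ t ∈ Set.Ioi (0:ℝ), HasDerivAt (fun s => φ z s) (φt z t) t)
    (hφz : ∀ z ∈ Set.Ioi (0:ℝ), ∀ t ∈ Set.Ioi (0:ℝ), HasDerivAt (fun w => φ w t) (φz z t) z)
    (hφzz : ∀ z ∈ Set.Ioi (0:ℝ), ∀ t ∈ Set.Ioi (0:ℝ), HasDerivAt (fun w => φz w t) (φzz z t) z)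
    (hφt_cont : ContinuousOn (fun z : ℝ × ℝ => φt z.1 z.2) (Set.Ioi 0 ×ˢ Set.Ioi 0))
    (hφz_cont : ContinuousOn (fun z : ℝ × ℝ => φz z.1 z.2) (Set.Ioi 0 ×ˢ Set.Ioi 0))
    (hφzz_cont : ContinuousOn (fun z : ℝ × ℝ => φzz z.1 z.2) (Set.Ioi 0 ×ˢ Set.Ioi 0))
    (hφz_pos : ∀ z ∈ Set.Ioi (0:ℝ), ∀ t ∈ Set.Ioi (0:ℝ), 0 < φz z t)
    (hφpde : ∀ z ∈ Set.Ioi (0:ℝ), ∀ t ∈ Set.Ioi (0:ℝ),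
      φt z t = 4 * αt |φz z t| * φzz z t)
    (hbc1 : ∀ z : ℝ, 0 < z →
      Filter.Tendsto (fun t => φ z t) (nhdsWithin 0 (Set.Ioi 0)) (nhds 1))
    (hbc2 : ∀ t : ℝ, 0 < t → φ 0 t = 0)
    (hbc3 : ∀ t : ℝ, 0 < t →
      Filter.Tendsto (fun z => φ z t) Filter.atTop (nhds 1)) :
    ∀ x ∈ closure Ω, ∀ y ∈ closure Ω, ∀ t ∈ Set.Ioc (0:ℝ) T,
      |u y t - u x t| ≤
        M * φ (Real.sqrt (∑ i, (y i - x i) ^ 2) / M) (t / M ^ 2) := by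

  have hS : IsNeumannSolution T Ω A b u ut gu hu :=
    ⟨hu_cont, hut, hgu, hhu, hut_cont, hgu_cont, hhu_cont, hpde, hneumann⟩
  have hB := isBarrier_rescale hM (αt := αt) (φ := φ) (φt := φt) (φz := φz) (φzz := φzz)
    ⟨hφ_cont, hφt, hφz, hφzz, hφt_cont, hφz_cont, hφzz_cont, hφz_pos,
      fun z hz t ht => by rw [hφpde z hz t ht, abs_of_pos (hφz_pos z hz t ht)], hbc1, hbc2⟩
  have key : ∀ x ∈ closure Ω, ∀ y ∈ closure Ω, ∀ t ∈ Set.Ioc (0 : ℝ) T,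
      u y t - u x t ≤ M * φ (euclLength (y - x) / M) (t / M ^ 2) := fun x hx y hy t ht =>
    hS.two_point_le hB hT hΩ_open hΩ_conv hΩ_bdd (fun i j => (hA_smooth i j).continuous) hA_symm
      hA_psd hb_cont hαt_pos hα hosc hx hy ht
  intro x hx y hy t ht
  refine abs_le.2 ⟨?_, key x hx y hy t ht⟩
  have h := key y hy x hx t ht
  rw [euclLength_sub_comm] at h
  change u x t - u y t ≤ M * φ (Real.sqrt (∑ i, (y i - x i) ^ 2) / M) (t / M ^ 2) at h
  linarith
end

section
/- Let Ω ⊂ ℝⁿ be open, bounded and convex, let T > 0, α ∈ (0,1], c > 0, and let C : (0,∞) → (0,∞) be nonincreasing. Let f : Ω × (0,T] → ℝ be differentiable in space and in time and suppose: (i) for every x₀ ∈ ∂Ω, every r > 0 and every t₀ > r², the oscillation of f over the set {(x,t) ∈ Ω × (0,T] : |x−x₀| < r, t₀ − r² < t ≤ t₀} is at most C(t₀)·r^α; (ii) for all (x,t) ∈ Ω × (0,T], |∇f(x,t)| ≤ c·(dist(x,∂Ω)^{−2} + t^{−1})^{1/2} and |∂_t f(x,t)| ≤ c·(dist(x,∂Ω)^{−2}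 + t^{−1}). Then, with α' = α/(α+1), for every τ ∈ (0,T] there exists C' > 0 (depending only on τ, the diameter of Ω, c, α, and the function C) such that for all x, y ∈ Ω and all s, t ∈ [τ,T]: |f(x,t) − f(y,s)| ≤ C'·(|x−y| + |t−s|^{1/2})^{α'}. -/
theorem abs_sub_le_of_partial_deriv_bound {n : ℕ} (f : (Fin n → ℝ) → ℝ)
    (g : (Fin n → ℝ) → Fin n → ℝ) (x y : Fin n → ℝ) (M : ℝ)
    (hf : ∀ z ∈ Metric.closedBall x (dist y x), ∀ i,
      HasDerivAt (fun s : ℝ => f (z + s • (Pi.single i 1 : Fin n → ℝ))) (g z i) 0)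
    (hg : ∀ z ∈ Metric.closedBall x (dist y x), ∀ i, |g z i| ≤ M) (hM : 0 ≤ M) :
    |f y - f x| ≤ n * (M * dist y x) := by
  classical
  have key : ∀ S : Finset (Fin n), |f (S.piecewise y x) - f x| ≤ S.card * (M * dist y x) := by
    intro S
    induction S using Finset.induction_on with
    | empty => simp
    | insert a S ha ih =>
      set z := S.piecewise y x with hz
      have hza : z a = x a := by simp [hz, ha]
      have hmem : ∀ u ∈ Set.uIcc (x a) (y a),
          Function.update z a u ∈ Metric.closedBall x (dist y x) := by
        intro u hu
        rw [Metric.mem_closedBall, dist_pi_le_iff dist_nonneg]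
        intro i
        by_cases hi : i = a
        · subst hi
          rw [Function.update_self, dist_comm]
          refine le_trans ?_ (dist_le_pi_dist y x i)
          rw [dist_comm (y i)]
          exact Real.dist_left_le_of_mem_uIcc hu
        · rw [Function.update_of_ne hi, hz]
          by_cases hS : i ∈ S
          · simpa [hS] using dist_le_pi_dist y x i
          · simp [hS]
      have hd : ∀ u ∈ Set.uIcc (x a) (y a), HasDerivWithinAt
          (fun u => f (Function.update z a u)) (g (Function.update z a u) a)
          (Set.uIcc (x a) (y a)) u := by
        intro u hu
        have h := hf _ (hmem u hu) a
        rw [← sub_self u] at h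
        have h2 := HasDerivAt.comp_sub_const u u h
        refine (h2.congr_of_eventuallyEq (Filter.Eventually.of_forall fun v => ?_)).hasDerivWithinAt
        simp only
        congr 1
        ext i
        by_cases hi : i = a
        · subst hi; simp
        · simp [hi]
      have hmv := (convex_uIcc (x a) (y a)).norm_image_sub_le_of_norm_hasDerivWithin_le hd
        (fun u hu => hg _ (hmem u hu) a) Set.left_mem_uIcc Set.right_mem_uIcc
      have hx : Function.update z a (x a) = z := by rw [← hza, Function.update_eq_self]
      rw [hx, ← Finset.piecewise_insert, Real.norm_eq_abs, ← dist_eq_norm] at hmv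
      have h1 : M * dist (y a) (x a) ≤ M * dist y x :=
        mul_le_mul_of_nonneg_left (dist_le_pi_dist y x a) hM
      have h2 := abs_sub_le (f ((insert a S).piecewise y x)) (f z) (f x)
      rw [Finset.card_insert_of_notMem ha]
      push_cast
      linarith
  simpa using key Finset.univ

theorem frontier_nonempty_of_isBounded {E : Type*} [NormedAddCommGroup E] [NormedSpace ℝ E]
    [Nontrivial E] {s : Set E} (hs : s.Nonempty) (hb : Bornology.IsBounded s) :
    (frontier s).Nonempty := by
  rw [nonempty_frontier_iff]
  refine ⟨hs, fun h => ?_⟩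
  subst h
  exact NormedSpace.unbounded_univ ℝ E hb

theorem closedBall_subset_of_lt_infDist_frontier {E : Type*} [NormedAddCommGroup E]
    [NormedSpace ℝ E] {s : Set E} {x : E} {r : ℝ} (hs : IsOpen s) (hx : x ∈ s) (hr : 0 ≤ r)
    (h : r < Metric.infDist x (frontier s)) : Metric.closedBall x r ⊆ s := by
  refine (convex_closedBall x r).isPreconnected.subset_left_of_subset_union hs
    isClosed_closure.isOpen_compl
    (Set.disjoint_compl_right_iff_subset.2 subset_closure) (fun z hz => ?_)
    ⟨x, Metric.mem_closedBall_self hr, hx⟩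
  by_contra hzs
  rw [Set.mem_union, not_or, Set.notMem_compl_iff] at hzs
  have hzf : z ∈ frontier s := by
    rw [hs.frontier_eq]
    exact ⟨hzs.2, hzs.1⟩
  have := Metric.infDist_le_dist_of_mem (x := x) hzf
  rw [Metric.mem_closedBall, dist_comm] at hz
  linarith

theorem dist_le_sqrt_sum_sq {n : ℕ} (x y : Fin n → ℝ) :
    dist x y ≤ √(∑ i, (x i - y i) ^ 2) := by
  rw [dist_pi_le_iff (Real.sqrt_nonneg _)]
  intro i
  rw [Real.dist_eq]
  exact Real.abs_le_sqrt (Finset.single_le_sum (f := fun i => (x i - y i) ^ 2)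
    (fun j _ => sq_nonneg _) (Finset.mem_univ i))

theorem sqrt_sum_sq_le {n : ℕ} (x y : Fin n → ℝ) :
    √(∑ i, (x i - y i) ^ 2) ≤ n * dist x y := by
  refine Real.sqrt_le_iff.2 ⟨by positivity, ?_⟩
  have h : ∀ i ∈ Finset.univ, (x i - y i) ^ 2 ≤ dist x y ^ 2 := fun i _ => by
    rw [← sq_abs, ← Real.dist_eq]
    exact pow_le_pow_left₀ dist_nonneg (dist_le_pi_dist x y i) 2
  refine (Finset.sum_le_card_nsmul _ _ _ h).trans ?_
  rw [Finset.card_univ, Fintype.card_fin, nsmul_eq_mul, mul_pow]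
  have : (n : ℝ) ≤ (n : ℝ) ^ 2 := by exact_mod_cast Nat.le_self_pow two_ne_zero n
  gcongr

theorem sqrt_sum_sq_triangle {n : ℕ} (x y z : Fin n → ℝ) :
    √(∑ i, (x i - z i) ^ 2) ≤ √(∑ i, (x i - y i) ^ 2) + √(∑ i, (y i - z i) ^ 2) := by
  have h := dist_triangle (WithLp.toLp 2 x) (WithLp.toLp 2 y) (WithLp.toLp 2 z)
  simpa only [EuclideanSpace.dist_eq, Real.dist_eq, sq_abs] using h

/-- The estimate at scale `δ`: the boundary oscillation bound is used within distance `2δ` of the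
boundary, the interior derivative bounds elsewhere. -/
theorem abs_sub_le_of_boundary_osc_of_interior_deriv
    {n : ℕ} (hn : 1 ≤ n) {Ω : Set (Fin n → ℝ)} (hΩ_open : IsOpen Ω)
    (hΩ_bdd : Bornology.IsBounded Ω) {T α c τ : ℝ} (hc : 0 < c) (hτ : 0 < τ)
    {C : ℝ → ℝ} (hC_pos : ∀ s : ℝ, 0 < s → 0 < C s)
    (hC_anti : ∀ s s' : ℝ, 0 < s → s ≤ s' → C s' ≤ C s)
    {f ft : (Fin n → ℝ) → ℝ → ℝ} {gf : (Fin n → ℝ) → ℝ → Fin n → ℝ}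
    (hft : ∀ x ∈ Ω, ∀ t ∈ Set.Ioc (0:ℝ) T,
      HasDerivWithinAt (fun s => f x s) (ft x t) (Set.Ioc 0 T) t)
    (hgf : ∀ x ∈ Ω, ∀ t ∈ Set.Ioc (0:ℝ) T, ∀ i,
      HasDerivAt (fun s : ℝ => f (x + s • (Pi.single i 1 : Fin n → ℝ)) t) (gf x t i) 0)
    (hosc : ∀ x₀ ∈ frontier Ω, ∀ r : ℝ, 0 < r → ∀ t₀ : ℝ, r ^ 2 < t₀ →
      ∀ x ∈ Ω, ∀ t ∈ Set.Ioc (0:ℝ) T,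
      √(∑ i, (x i - x₀ i) ^ 2) < r → t₀ - r ^ 2 < t → t ≤ t₀ →
      ∀ y ∈ Ω, ∀ s ∈ Set.Ioc (0:ℝ) T,
      √(∑ i, (y i - x₀ i) ^ 2) < r → t₀ - r ^ 2 < s → s ≤ t₀ →
        f x t - f y s ≤ C t₀ * r ^ α)
    (hgrad : ∀ x ∈ Ω, ∀ t ∈ Set.Ioc (0:ℝ) T,
      √(∑ i, (gf x t i) ^ 2) ≤ c * √(1 / Metric.infDist x (frontier Ω) ^ 2 + 1 / t))
    (htime : ∀ x ∈ Ω, ∀ t ∈ Set.Ioc (0:ℝ) T,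
      |ft x t| ≤ c * (1 / Metric.infDist x (frontier Ω) ^ 2 + 1 / t))
    {x y : Fin n → ℝ} (hx : x ∈ Ω) (hy : y ∈ Ω) {s t : ℝ} (hs : s ∈ Set.Icc τ T)
    (ht : t ∈ Set.Icc τ T) {ρ δ : ℝ}
    (hρ : √(∑ i, (x i - y i) ^ 2) + √|t - s| ≤ ρ)
    (hδ : 0 < δ) (hρδ : ρ ≤ δ) (hδτ : (3 * n * δ) ^ 2 < τ) :
    |f x t - f y s| ≤
      C τ * (3 * n * δ) ^ α + (n * (c * (2 / δ) * ρ) + c * (2 / δ ^ 2) * ρ ^ 2) := by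
  have hn1 : (1 : ℝ) ≤ n := by exact_mod_cast hn
  have hCτ := hC_pos τ hτ
  have hE := Real.sqrt_nonneg (∑ i, (x i - y i) ^ 2)
  have hS := Real.sqrt_nonneg |t - s|
  have hρ0 : 0 ≤ ρ := by linarith
  have hts : |t - s| ≤ ρ ^ 2 := by
    rw [← Real.sq_sqrt (abs_nonneg (t - s))]
    exact pow_le_pow_left₀ hS (by linarith) 2
  have hs' : s ∈ Set.Ioc 0 T := ⟨hτ.trans_le hs.1, hs.2⟩
  have ht' : t ∈ Set.Ioc 0 T := ⟨hτ.trans_le ht.1, ht.2⟩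
  have hδr : δ ≤ n * δ := le_mul_of_one_le_left hδ.le hn1
  rcases lt_or_ge (Metric.infDist x (frontier Ω)) (2 * δ) with hd | hd
  · have : Nonempty (Fin n) := ⟨⟨0, hn⟩⟩
    obtain ⟨x₀, hx₀, hxx₀⟩ :=
      (Metric.infDist_lt_iff (frontier_nonempty_of_isBounded ⟨x, hx⟩ hΩ_bdd)).1 hd
    have hr : 0 < 3 * n * δ := by positivity
    have hxr : √(∑ i, (x i - x₀ i) ^ 2) < 2 * (n * δ) :=
      (sqrt_sum_sq_le x x₀).trans_lt (by nlinarith)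
    have hyx : √(∑ i, (y i - x i) ^ 2) = √(∑ i, (x i - y i) ^ 2) := by
      congr 1
      exact Finset.sum_congr rfl fun i _ => by ring
    have hyr := sqrt_sum_sq_triangle y x x₀
    have hρr : ρ ^ 2 < (3 * n * δ) ^ 2 := pow_lt_pow_left₀ (by linarith) hρ0 two_ne_zero
    have htm := le_max_left t s
    have hsm := le_max_right t s
    have hmt : max t s - (3 * n * δ) ^ 2 < t := by
      rcases max_cases t s with h | h <;> linarith [neg_abs_le (t - s), pow_pos hr 2]
    have hms : max t s - (3 * n * δ) ^ 2 < s := by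
      rcases max_cases t s with h | h <;> linarith [le_abs_self (t - s), pow_pos hr 2]
    have hτm : τ ≤ max t s := ht.1.trans htm
    have h1 := hosc x₀ hx₀ _ hr (max t s) (by linarith) x hx t ht' (by linarith) hmt htm
      y hy s hs' (by linarith) hms hsm
    have h2 := hosc x₀ hx₀ _ hr (max t s) (by linarith) y hy s hs' (by linarith) hms hsm
      x hx t ht' (by linarith) hmt htm
    have h3 : C (max t s) * (3 * n * δ) ^ α ≤ C τ * (3 * n * δ) ^ α :=
      mul_le_mul_of_nonneg_right (hC_anti τ _ hτ hτm) (by positivity)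
    have h4 : 0 ≤ n * (c * (2 / δ) * ρ) + c * (2 / δ ^ 2) * ρ ^ 2 := by positivity
    rw [abs_le]
    constructor <;> linarith
  · have hδ2 : δ ^ 2 ≤ τ := by
      have : δ ^ 2 ≤ (3 * n * δ) ^ 2 := pow_le_pow_left₀ hδ.le (by linarith) 2
      linarith
    have hweight : ∀ z, δ ≤ Metric.infDist z (frontier Ω) → ∀ u ∈ Set.Icc τ T,
        1 / Metric.infDist z (frontier Ω) ^ 2 + 1 / u ≤ 2 / δ ^ 2 := by
      intro z hz u hu
      have h1 : 1 / Metric.infDist z (frontier Ω) ^ 2 ≤ 1 / δ ^ 2 := by gcongr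
      have h2 : 1 / u ≤ 1 / δ ^ 2 :=
        one_div_le_one_div_of_le (by positivity) (hδ2.trans hu.1)
      have h3 : 2 / δ ^ 2 = 1 / δ ^ 2 + 1 / δ ^ 2 := by ring
      linarith
    have hyx : dist y x ≤ ρ := by
      rw [dist_comm]
      linarith [dist_le_sqrt_sum_sq x y]
    have hball : Metric.closedBall x (dist y x) ⊆ Ω :=
      closedBall_subset_of_lt_infDist_frontier hΩ_open hx dist_nonneg (by linarith)
    have hfar : ∀ z ∈ Metric.closedBall x (dist y x), δ ≤ Metric.infDist z (frontier Ω) := by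
      intro z hz
      rw [Metric.mem_closedBall, dist_comm] at hz
      linarith [Metric.infDist_le_infDist_add_dist (s := frontier Ω) (x := x) (y := z)]
    have hspace : |f y t - f x t| ≤ n * (c * (2 / δ) * dist y x) := by
      refine abs_sub_le_of_partial_deriv_bound (fun z => f z t) (fun z => gf z t) x y _
        (fun z hz i => hgf z (hball hz) t ht' i) (fun z hz i => ?_) (by positivity)
      calc |gf z t i| ≤ √(∑ i, (gf z t i) ^ 2) := Real.abs_le_sqrt
            (Finset.single_le_sum (f := fun i => (gf z t i) ^ 2)
              (fun j _ => sq_nonneg _) (Finset.mem_univ i))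
        _ ≤ c * √(1 / Metric.infDist z (frontier Ω) ^ 2 + 1 / t) := hgrad z (hball hz) t ht'
        _ ≤ c * (2 / δ) := by
          refine mul_le_mul_of_nonneg_left (Real.sqrt_le_iff.2 ⟨by positivity, ?_⟩) hc.le
          refine (hweight z (hfar z hz) t ht).trans ?_
          rw [div_pow]
          gcongr
          norm_num
    have hyfar := hfar y (Metric.mem_closedBall.2 le_rfl)
    have hsub : Set.Icc τ T ⊆ Set.Ioc 0 T := fun u hu => ⟨hτ.trans_le hu.1, hu.2⟩
    have htime' : |f y t - f y s| ≤ c * (2 / δ ^ 2) * |t - s| :=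
      (convex_Icc τ T).norm_image_sub_le_of_norm_hasDerivWithin_le
        (fun u hu => (hft y hy u (hsub hu)).mono hsub)
        (fun u hu => (htime y hy u (hsub hu)).trans
          (mul_le_mul_of_nonneg_left (hweight y hyfar u hu) hc.le)) hs ht
    have h1 : n * (c * (2 / δ) * dist y x) ≤ n * (c * (2 / δ) * ρ) := by gcongr
    have h2 : c * (2 / δ ^ 2) * |t - s| ≤ c * (2 / δ ^ 2) * ρ ^ 2 := by gcongr
    have h3 : 0 ≤ C τ * (3 * n * δ) ^ α := by positivity
    have h4 := abs_sub_le (f x t) (f y t) (f y s)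
    rw [abs_sub_comm (f x t) (f y t)] at h4
    linarith

/-- A bound for nearby points of a convex set passes to all points, by subdividing segments. -/
theorem abs_sub_le_of_subdivision {n : ℕ} {Ω : Set (Fin n → ℝ)} (hΩ : Convex ℝ Ω)
    {I : Set ℝ} (hI : Convex ℝ I) {f : (Fin n → ℝ) → ℝ → ℝ} {N : ℕ} (hN : 1 ≤ N) {ρ B : ℝ}
    (hf : ∀ x ∈ Ω, ∀ y ∈ Ω, ∀ s ∈ I, ∀ t ∈ I,
      √(∑ i, (x i - y i) ^ 2) + √|t - s| ≤ ρ / √N → |f x t - f y s| ≤ B)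
    {x y : Fin n → ℝ} (hx : x ∈ Ω) (hy : y ∈ Ω) {s t : ℝ} (hs : s ∈ I) (ht : t ∈ I)
    (hρ : √(∑ i, (x i - y i) ^ 2) + √|t - s| ≤ ρ) :
    |f x t - f y s| ≤ N * B := by
  have hN1 : (1 : ℝ) ≤ N := by exact_mod_cast hN
  have hN0 : (0 : ℝ) < N := by linarith
  have hw : ∀ k : ℕ, k ≤ N → (k : ℝ) / N ∈ Set.Icc (0 : ℝ) 1 := fun k hk =>
    ⟨by positivity, (div_le_one hN0).2 (by exact_mod_cast hk)⟩
  have hstep : ∀ k : ℕ, k < N →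
      dist (f (AffineMap.lineMap x y ((k : ℝ) / N)) (AffineMap.lineMap t s ((k : ℝ) / N)))
        (f (AffineMap.lineMap x y (((k + 1 : ℕ) : ℝ) / N))
          (AffineMap.lineMap t s (((k + 1 : ℕ) : ℝ) / N))) ≤ B := by
    intro k hk
    have hwk := hw k hk.le
    have hwk' := hw (k + 1) hk
    refine hf _ (hΩ.lineMap_mem hx hy hwk) _ (hΩ.lineMap_mem hx hy hwk')
      _ (hI.lineMap_mem ht hs hwk') _ (hI.lineMap_mem ht hs hwk) (le_trans ?_
        (div_le_div_of_nonneg_right hρ (Real.sqrt_nonneg _)))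
    have h1 : √(∑ i, (AffineMap.lineMap x y ((k : ℝ) / N) i -
        AffineMap.lineMap x y (((k + 1 : ℕ) : ℝ) / N) i) ^ 2) =
        √(∑ i, (x i - y i) ^ 2) / N := by
      rw [← Real.sqrt_sq hN0.le, ← Real.sqrt_div' _ (sq_nonneg _), Finset.sum_div,
        Real.sqrt_sq hN0.le]
      congr 1
      refine Finset.sum_congr rfl fun i _ => ?_
      simp only [AffineMap.lineMap_apply, vsub_eq_sub, vadd_eq_add, Pi.add_apply, Pi.smul_apply,
        Pi.sub_apply, smul_eq_mul]
      push_cast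
      field_simp
      ring
    have h2 : √|AffineMap.lineMap t s ((k : ℝ) / N) -
        AffineMap.lineMap t s (((k + 1 : ℕ) : ℝ) / N)| = √|t - s| / √N := by
      rw [← Real.sqrt_div' _ hN0.le]
      congr 1
      rw [← abs_of_pos hN0, ← abs_div, abs_of_pos hN0]
      congr 1
      simp only [AffineMap.lineMap_apply, vsub_eq_sub, vadd_eq_add, smul_eq_mul]
      push_cast
      field_simp
      ring
    rw [h1, h2, add_div]
    have h3 : √(N : ℝ) ≤ N := (Real.sqrt_le_left hN0.le).2 (by nlinarith)
    have h4 : 0 < √(N : ℝ) := Real.sqrt_pos.2 hN0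
    gcongr
  have h := dist_le_range_sum_of_dist_le (f := fun k : ℕ =>
    f (AffineMap.lineMap x y ((k : ℝ) / N)) (AffineMap.lineMap t s ((k : ℝ) / N))) N
    (d := fun _ => B) (fun {k} hk => hstep k hk)
  simpa [div_self hN0.ne', Real.dist_eq] using h

/-- Linking lemma: a boundary Hölder oscillation estimate plus
interior gradient bounds yield a global parabolic Hölder estimate with exponent
`α' = α/(α+1)`. -/
theorem holder_linking_lemma
    (n : ℕ) (hn : 1 ≤ n)
    (Ω : Set (Fin n → ℝ)) (hΩ_open : IsOpen Ω) (hΩ_bdd : Bornology.IsBounded Ω)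
    (hΩ_conv : Convex ℝ Ω)
    (T α c : ℝ) (hT : 0 < T) (hα : α ∈ Set.Ioc (0:ℝ) 1) (hc : 0 < c)
    (C : ℝ → ℝ) (hC_pos : ∀ s : ℝ, 0 < s → 0 < C s)
    (hC_anti : ∀ s s' : ℝ, 0 < s → s ≤ s' → C s' ≤ C s) :
    ∀ τ ∈ Set.Ioc (0:ℝ) T,
    ∃ C' : ℝ, 0 < C' ∧
      ∀ (f ft : (Fin n → ℝ) → ℝ → ℝ) (gf : (Fin n → ℝ) → ℝ → Fin n → ℝ),
      -- f is differentiable in space and in time on Ω × (0,T]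
      (∀ x ∈ Ω, ∀ t ∈ Set.Ioc (0:ℝ) T,
        HasDerivWithinAt (fun s => f x s) (ft x t) (Set.Ioc 0 T) t) →
      (∀ x ∈ Ω, ∀ t ∈ Set.Ioc (0:ℝ) T, ∀ i,
        HasDerivAt (fun s : ℝ => f (x + s • (Pi.single i 1 : Fin n → ℝ)) t)
          (gf x t i) 0) →
      -- (i) boundary Hölder oscillation estimate
      (∀ x₀ ∈ frontier Ω, ∀ r : ℝ, 0 < r → ∀ t₀ : ℝ, r ^ 2 < t₀ →
        ∀ x ∈ Ω, ∀ t ∈ Set.Ioc (0:ℝ) T,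
        Real.sqrt (∑ i, (x i - x₀ i) ^ 2) < r → t₀ - r ^ 2 < t → t ≤ t₀ →
        ∀ y ∈ Ω, ∀ s ∈ Set.Ioc (0:ℝ) T,
        Real.sqrt (∑ i, (y i - x₀ i) ^ 2) < r → t₀ - r ^ 2 < s → s ≤ t₀ →
          f x t - f y s ≤ C t₀ * r ^ α) →
      -- (ii) interior gradient bounds
      (∀ x ∈ Ω, ∀ t ∈ Set.Ioc (0:ℝ) T,
        Real.sqrt (∑ i, (gf x t i) ^ 2) ≤
          c * Real.sqrt (1 / Metric.infDist x (frontier Ω) ^ 2 + 1 / t)) →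
      (∀ x ∈ Ω, ∀ t ∈ Set.Ioc (0:ℝ) T,
        |ft x t| ≤ c * (1 / Metric.infDist x (frontier Ω) ^ 2 + 1 / t)) →
      ∀ x ∈ Ω, ∀ y ∈ Ω, ∀ s ∈ Set.Icc τ T, ∀ t ∈ Set.Icc τ T,
        |f x t - f y s| ≤
          C' * (Real.sqrt (∑ i, (x i - y i) ^ 2) + Real.sqrt |t - s|)
            ^ (α / (α + 1)) := by
  rintro τ ⟨hτ, -⟩
  obtain ⟨hα0, -⟩ := hα
  have hn1 : (1 : ℝ) ≤ n := by exact_mod_cast hn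
  have hn0 : (0 : ℝ) < n := by linarith
  have hCτ := hC_pos τ hτ
  have hα1 : 0 < α + 1 := by linarith
  set K := C τ * (3 * n) ^ α + (n * (c * 2) + c * 2) with hK
  have hK0 : 0 < K := by positivity
  set δ₀ := √τ / (4 * n) with hδ₀
  have hδ₀0 : 0 < δ₀ := div_pos (Real.sqrt_pos.2 hτ) (by positivity)
  have hδ₀τ : (3 * n * δ₀) ^ 2 < τ := by
    have h1 : 3 * n * δ₀ = 3 / 4 * √τ := by
      rw [hδ₀]
      field_simp
    rw [h1, mul_pow, Real.sq_sqrt hτ.le]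
    linarith
  set ρ₀ := min 1 (δ₀ ^ (α + 1)) with hρ₀
  have hρ₀0 : 0 < ρ₀ := lt_min one_pos (by positivity)
  set R := n * Metric.diam Ω + √T with hR
  obtain ⟨N, hN⟩ := exists_nat_ge (max 1 ((R / ρ₀) ^ 2))
  have hN1 : 1 ≤ N := by exact_mod_cast (le_max_left _ _).trans hN
  have hN0 : (0 : ℝ) < N := by exact_mod_cast hN1
  have hNR : R / ρ₀ ≤ √N := Real.le_sqrt_of_sq_le ((le_max_right _ _).trans hN)
  refine ⟨N * K, by positivity, ?_⟩
  intro f ft gf hft hgf hosc hgrad htime x hx y hy s hs t ht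
  set ρ := √(∑ i, (x i - y i) ^ 2) + √|t - s| with hρ
  have hρnonneg : 0 ≤ ρ := by positivity
  have hρR : ρ ≤ R := by
    refine add_le_add ((sqrt_sum_sq_le x y).trans ?_) (Real.sqrt_le_sqrt ?_)
    · exact mul_le_mul_of_nonneg_left (Metric.dist_le_diam_of_mem hΩ_bdd hx hy) hn0.le
    · rw [abs_le]
      constructor <;> linarith [hs.1, hs.2, ht.1, ht.2]
  rcases hρnonneg.eq_or_lt with hρ0 | hρ0
  · have h1 : dist x y ≤ 0 := (dist_le_sqrt_sum_sq x y).trans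
      (by linarith [Real.sqrt_nonneg |t - s|])
    have h2 : √|t - s| ≤ 0 := by linarith [Real.sqrt_nonneg (∑ i, (x i - y i) ^ 2)]
    have h3 : t = s := by
      have := Real.sqrt_eq_zero (abs_nonneg (t - s)) |>.1 (h2.antisymm (Real.sqrt_nonneg _))
      linarith [abs_eq_zero.1 this]
    rw [dist_le_zero.1 h1, h3, sub_self, abs_zero]
    positivity
  have hsN : 1 ≤ √(N : ℝ) := Real.one_le_sqrt.2 (by exact_mod_cast hN1)
  set ρ₁ := ρ / √N with hρ₁
  have hρ₁0 : 0 < ρ₁ := by positivity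
  have hρ₁ρ : ρ₁ ≤ ρ := div_le_self hρnonneg hsN
  have hρ₁le : ρ₁ ≤ ρ₀ := by
    rw [hρ₁, div_le_iff₀ (by positivity), mul_comm]
    exact hρR.trans ((div_le_iff₀ hρ₀0).1 hNR)
  have hρ₁1 : ρ₁ ≤ 1 := hρ₁le.trans (min_le_left _ _)
  set δ := ρ₁ ^ (1 / (α + 1)) with hδ
  have hδ0 : 0 < δ := by positivity
  have hρ₁δ : ρ₁ ≤ δ :=
    Real.self_le_rpow_of_le_one hρ₁0.le hρ₁1 ((div_le_one hα1).2 (by linarith))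
  have hδδ₀ : δ ≤ δ₀ := by
    rw [hδ, one_div, Real.rpow_inv_le_iff_of_pos hρ₁0.le hδ₀0.le hα1]
    exact hρ₁le.trans (min_le_right _ _)
  have hδτ : (3 * n * δ) ^ 2 < τ := lt_of_le_of_lt (by gcongr) hδ₀τ
  set P := ρ₁ ^ (α / (α + 1)) with hP
  have hP0 : 0 < P := by positivity
  have hP1 : P ≤ 1 := Real.rpow_le_one hρ₁0.le hρ₁1 (by positivity)
  have hδα : δ ^ α = P := by
    rw [hδ, ← Real.rpow_mul hρ₁0.le, one_div_mul_eq_div]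
  have hPδ : P * δ = ρ₁ := by
    rw [hP, hδ, ← Real.rpow_add hρ₁0, ← add_div, div_self hα1.ne', Real.rpow_one]
  have hbound : C τ * (3 * n * δ) ^ α + (n * (c * (2 / δ) * ρ₁) + c * (2 / δ ^ 2) * ρ₁ ^ 2) ≤
      K * ρ ^ (α / (α + 1)) := by
    have h1 : c * (2 / δ) * ρ₁ = c * 2 * P := by
      rw [← hPδ]
      field_simp
    have h2 : c * (2 / δ ^ 2) * ρ₁ ^ 2 = c * 2 * P ^ 2 := by
      rw [← hPδ]
      field_simp
    rw [Real.mul_rpow (by positivity) hδ0.le, hδα, h1, h2]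
    have h3 : c * 2 * P ^ 2 ≤ c * 2 * P := by
      refine mul_le_mul_of_nonneg_left ?_ (by positivity)
      nlinarith
    have h4 : K * P ≤ K * ρ ^ (α / (α + 1)) := by
      refine mul_le_mul_of_nonneg_left ?_ hK0.le
      exact Real.rpow_le_rpow hρ₁0.le hρ₁ρ (by positivity)
    refine le_trans ?_ h4
    rw [hK]
    linarith
  rw [mul_assoc]
  refine abs_sub_le_of_subdivision hΩ_conv (convex_Icc τ T) hN1 (ρ := ρ) ?_ hx hy hs ht le_rfl
  intro x' hx' y' hy' s' hs' t' ht' h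
  exact (abs_sub_le_of_boundary_osc_of_interior_deriv hn hΩ_open hΩ_bdd hc hτ hC_pos
    hC_anti hft hgf hosc hgrad htime hx' hy' hs' ht' h hδ0 hρ₁δ hδτ).trans hbound
end
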